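/- Let K be a commutative semiring with 0 ≠ 1 and Δ a finite alphabet. A nested word series S : NW(Δ) → K is regular if and only if S is sRMSO(K)-definable, if and only if S is sREMSO(K)-definable. -/

import Mathlib

/-! ### Nested words and weighted nested word automata -/

/-- A nesting relation of width `n` (positions `1,…,n`). -/
def IsNestingRel (n : ℕ) (ν : ℕ → ℕ → Prop) : Prop :=
  (∀ i j, ν i j → 1 ≤ i ∧ i < j ∧ j ≤ n) ∧
  (∀ i j j', ν i j → ν i j' → j = j') ∧
  (∀ i i' j, ν i j → ν i' j → i = i') ∧
  (∀ i j i' j', ν i j → ν i' j' → i < i' → j < i' ∨ j' < j)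

/-- A nested word over `Δ`: a nonempty word together with a nesting relation. -/
structure NestedWord (Δ : Type) : Type where
  word : List Δ
  ne : word ≠ []
  rel : ℕ → ℕ → Prop
  isNest : IsNestingRel word.length rel

namespace NestedWord

variable {Δ : Type} (nw : NestedWord Δ)

/-- The length of the nested word. -/
def len : ℕ := nw.word.length

/-- The letter at (1-based) position `j`. -/
def letter (j : ℕ) : Δ := nw.word.getD (j - 1) (nw.word.head nw.ne)

def IsCall (j : ℕ) : Prop := ∃ i, nw.rel j i
def IsReturn (j : ℕ) : Prop := ∃ i, nw.rel i j
def IsInternal (j : ℕ) : Prop :=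
  1 ≤ j ∧ j ≤ nw.len ∧ ¬ nw.IsCall j ∧ ¬ nw.IsReturn j

/-- The nesting depth of position `k`: the number of arches open at `k`. -/
noncomputable def depth (k : ℕ) : ℕ :=
  Set.ncard {p : ℕ × ℕ | nw.rel p.1 p.2 ∧ p.1 ≤ k ∧ k ≤ p.2}

end NestedWord

/-- Clamp a function on `Fin (n+1)` to a function on `ℕ`. -/
def clampFun {Q : Type} {n : ℕ} (r : Fin (n + 1) → Q) : ℕ → Q :=
  fun k => r ⟨min k n, Nat.lt_succ_of_le (min_le_right _ _)⟩

/-- A weighted nested word automaton over the commutative semiring `K`. -/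
structure WNWA (K Δ : Type) [CommSemiring K] : Type 1 where
  Q : Type
  [fintQ : Fintype Q]
  ι : Q → K
  δcall : Q → Δ → Q → K
  δint : Q → Δ → Q → K
  δret : Q → Q → Δ → Q → K
  κ : Q → K

attribute [instance] WNWA.fintQ

namespace WNWA

variable {K Δ : Type} [CommSemiring K]

open Classical in
/-- The weight contributed by position `j` in a run `ρ`. -/
noncomputable def posWeight (A : WNWA K Δ) (nw : NestedWord Δ) (ρ : ℕ → A.Q) (j : ℕ) : K :=
  if nw.IsCall j then A.δcall (ρ (j - 1)) (nw.letter j) (ρ j)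
  else if h : nw.IsReturn j then
    A.δret (ρ (j - 1)) (ρ (h.choose - 1)) (nw.letter j) (ρ j)
  else A.δint (ρ (j - 1)) (nw.letter j) (ρ j)

/-- The weight of a run. -/
noncomputable def runWeight (A : WNWA K Δ) (nw : NestedWord Δ) (ρ : ℕ → A.Q) : K :=
  ∏ j ∈ Finset.Icc 1 nw.len, A.posWeight nw ρ j

/-- The behavior of a weighted nested word automaton. -/
noncomputable def behavior (A : WNWA K Δ) (nw : NestedWord Δ) : K :=
  ∑ r : Fin (nw.len + 1) → A.Q,
    A.ι (r 0) * A.runWeight nw (clampFun r) * A.κ (r (Fin.last _))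

end WNWA

/-- A nested word series is regular if it is the behavior of some WNWA. -/
def NWRegular {K Δ : Type} [CommSemiring K] (S : NestedWord Δ → K) : Prop :=
  ∃ A : WNWA K Δ, ∀ nw, A.behavior nw = S nw
/-! ### Weighted MSO logic over nested words -/

/-- Weighted MSO formulae over nested words: constants from `K`, atomic formulae
and their negations, closed under `∨`, `∧`, and the four quantifiers. -/
inductive WMSO (K Δ : Type) : Type where
  | const : K → WMSO K Δ
  | eqv : ℕ → ℕ → WMSO K Δ
  | lab : Δ → ℕ → WMSO K Δ
  | lev : ℕ → ℕ → WMSO K Δ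
  | nuv : ℕ → ℕ → WMSO K Δ
  | mem : ℕ → ℕ → WMSO K Δ
  | neq : ℕ → ℕ → WMSO K Δ
  | nlab : Δ → ℕ → WMSO K Δ
  | nle : ℕ → ℕ → WMSO K Δ
  | nnu : ℕ → ℕ → WMSO K Δ
  | nmem : ℕ → ℕ → WMSO K Δ
  | or : WMSO K Δ → WMSO K Δ → WMSO K Δ
  | and : WMSO K Δ → WMSO K Δ → WMSO K Δ
  | exF : ℕ → WMSO K Δ → WMSO K Δ
  | exS : ℕ → WMSO K Δ → WMSO K Δ
  | alF : ℕ → WMSO K Δ → WMSO K Δ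
  | alS : ℕ → WMSO K Δ → WMSO K Δ

namespace WMSO

variable {K Δ : Type} [CommSemiring K]

open Classical in
/-- Weighted semantics: `∨ ↦ +`, `∧ ↦ ·`, `∃ ↦ Σ`, `∀ ↦ Π`. -/
noncomputable def sem (nw : NestedWord Δ) :
    WMSO K Δ → (ℕ → ℕ) → (ℕ → Finset ℕ) → K
  | .const k, _, _ => k
  | .eqv x y, γ1, _ => if γ1 x = γ1 y then 1 else 0
  | .lab a x, γ1, _ => if nw.letter (γ1 x) = a then 1 else 0
  | .lev x y, γ1, _ => if γ1 x ≤ γ1 y then 1 else 0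
  | .nuv x y, γ1, _ => if nw.rel (γ1 x) (γ1 y) then 1 else 0
  | .mem x X, γ1, γ2 => if γ1 x ∈ γ2 X then 1 else 0
  | .neq x y, γ1, _ => if γ1 x = γ1 y then 0 else 1
  | .nlab a x, γ1, _ => if nw.letter (γ1 x) = a then 0 else 1
  | .nle x y, γ1, _ => if γ1 x ≤ γ1 y then 0 else 1
  | .nnu x y, γ1, _ => if nw.rel (γ1 x) (γ1 y) then 0 else 1
  | .nmem x X, γ1, γ2 => if γ1 x ∈ γ2 X then 0 else 1
  | .or φ ψ, γ1, γ2 => sem nw φ γ1 γ2 + sem nw ψ γ1 γ2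
  | .and φ ψ, γ1, γ2 => sem nw φ γ1 γ2 * sem nw ψ γ1 γ2
  | .exF x φ, γ1, γ2 =>
      ∑ i ∈ Finset.Icc 1 nw.len, sem nw φ (Function.update γ1 x i) γ2
  | .exS X φ, γ1, γ2 =>
      ∑ T ∈ (Finset.Icc 1 nw.len).powerset, sem nw φ γ1 (Function.update γ2 X T)
  | .alF x φ, γ1, γ2 =>
      ∏ i ∈ Finset.Icc 1 nw.len, sem nw φ (Function.update γ1 x i) γ2
  | .alS X φ, γ1, γ2 =>
      ∏ T ∈ (Finset.Icc 1 nw.len).powerset, sem nw φ γ1 (Function.update γ2 X T)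

/-- Free first-order variables. -/
def freeF : WMSO K Δ → Finset ℕ
  | .const _ => ∅
  | .eqv x y => {x, y}
  | .lab _ x => {x}
  | .lev x y => {x, y}
  | .nuv x y => {x, y}
  | .mem x _ => {x}
  | .neq x y => {x, y}
  | .nlab _ x => {x}
  | .nle x y => {x, y}
  | .nnu x y => {x, y}
  | .nmem x _ => {x}
  | .or φ ψ => φ.freeF ∪ ψ.freeF
  | .and φ ψ => φ.freeF ∪ ψ.freeF
  | .exF x φ => φ.freeF.erase x
  | .exS _ φ => φ.freeF
  | .alF x φ => φ.freeF.erase x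
  | .alS _ φ => φ.freeF

/-- Free second-order variables. -/
def freeS : WMSO K Δ → Finset ℕ
  | .mem _ X => {X}
  | .nmem _ X => {X}
  | .or φ ψ => φ.freeS ∪ ψ.freeS
  | .and φ ψ => φ.freeS ∪ ψ.freeS
  | .exF _ φ => φ.freeS
  | .alF _ φ => φ.freeS
  | .exS X φ => φ.freeS.erase X
  | .alS X φ => φ.freeS.erase X
  | _ => ∅

/-- Sentences: no free variables. -/
def Sentence (φ : WMSO K Δ) : Prop := φ.freeF = ∅ ∧ φ.freeS = ∅

end WMSO

/-! ### Classical MSO over nested words and syntactically unambiguous formulae -/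

/-- Classical MSO formulae over nested words. -/
inductive MSOF (Δ : Type) : Type where
  | eqv : ℕ → ℕ → MSOF Δ
  | lab : Δ → ℕ → MSOF Δ
  | lev : ℕ → ℕ → MSOF Δ
  | nuv : ℕ → ℕ → MSOF Δ
  | mem : ℕ → ℕ → MSOF Δ
  | not : MSOF Δ → MSOF Δ
  | or : MSOF Δ → MSOF Δ → MSOF Δ
  | and : MSOF Δ → MSOF Δ → MSOF Δ
  | exF : ℕ → MSOF Δ → MSOF Δ
  | exS : ℕ → MSOF Δ → MSOF Δ
  | alF : ℕ → MSOF Δ → MSOF Δ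
  | alS : ℕ → MSOF Δ → MSOF Δ

namespace MSOF

variable {Δ : Type}

/-- Substitution of first-order variable `x` by `y` (capture cannot occur for fresh `y`). -/
def substF (x y : ℕ) : MSOF Δ → MSOF Δ
  | eqv u v => eqv (if u = x then y else u) (if v = x then y else v)
  | lab a u => lab a (if u = x then y else u)
  | lev u v => lev (if u = x then y else u) (if v = x then y else v)
  | nuv u v => nuv (if u = x then y else u) (if v = x then y else v)
  | mem u X => mem (if u = x then y else u) X
  | not φ => not (substF x y φ)
  | or φ ψ => or (substF x y φ) (substF x y ψ)
  | and φ ψ => and (substF x y φ) (substF x y ψ)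
  | exF z φ => if z = x then exF z φ else exF z (substF x y φ)
  | exS Z φ => exS Z (substF x y φ)
  | alF z φ => if z = x then alF z φ else alF z (substF x y φ)
  | alS Z φ => alS Z (substF x y φ)

/-- Substitution of second-order variable `X` by `Y`. -/
def substS (X Y : ℕ) : MSOF Δ → MSOF Δ
  | mem u Z => mem u (if Z = X then Y else Z)
  | not φ => not (substS X Y φ)
  | or φ ψ => or (substS X Y φ) (substS X Y ψ)
  | and φ ψ => and (substS X Y φ) (substS X Y ψ)
  | exF z φ => exF z (substS X Y φ)
  | exS Z φ => if Z = X then exS Z φ else exS Z (substS X Y φ)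
  | alF z φ => alF z (substS X Y φ)
  | alS Z φ => if Z = X then alS Z φ else alS Z (substS X Y φ)
  | φ => φ

/-- Largest first-order variable occurring (free or bound). -/
def maxF : MSOF Δ → ℕ
  | eqv u v => max u v
  | lab _ u => u
  | lev u v => max u v
  | nuv u v => max u v
  | mem u _ => u
  | not φ => φ.maxF
  | or φ ψ => max φ.maxF ψ.maxF
  | and φ ψ => max φ.maxF ψ.maxF
  | exF z φ => max z φ.maxF
  | exS _ φ => φ.maxF
  | alF z φ => max z φ.maxF
  | alS _ φ => φ.maxF

/-- Largest second-order variable occurring (free or bound). -/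
def maxS : MSOF Δ → ℕ
  | mem _ X => X
  | not φ => φ.maxS
  | or φ ψ => max φ.maxS ψ.maxS
  | and φ ψ => max φ.maxS ψ.maxS
  | exF _ φ => φ.maxS
  | exS Z φ => max Z φ.maxS
  | alF _ φ => φ.maxS
  | alS Z φ => max Z φ.maxS
  | _ => 0

end MSOF

/-- The lexicographic (strict) order `Y < X` on sets, used to disambiguate set
quantification: `∃y. y ∈ X ∧ ¬ y ∈ Y ∧ ∀z. (z < y → (z ∈ Y ↔ z ∈ X))`,
where `y` and `z` are the first-order variables `0` and `1`. -/
def lessSet {Δ : Type} (Y X : ℕ) : MSOF Δ :=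
  .exF 0 (.and (.mem 0 X) (.and (.not (.mem 0 Y))
    (.alF 1 (.or (.lev 0 1)
      (.and (.or (.not (.mem 1 Y)) (.mem 1 X)) (.or (.not (.mem 1 X)) (.mem 1 Y)))))))

mutual
  /-- `PlusOf K ψ φ` : `φ = ψ⁺`, the positive syntactically unambiguous weighted
  version of the classical formula `ψ`. -/
  inductive PlusOf (K : Type) {Δ : Type} : MSOF Δ → WMSO K Δ → Prop where
    | eqv : ∀ x y, PlusOf K (.eqv x y) (.eqv x y)
    | lab : ∀ (a : Δ) x, PlusOf K (.lab a x) (.lab a x)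
    | lev : ∀ x y, PlusOf K (.lev x y) (.lev x y)
    | nuv : ∀ x y, PlusOf K (.nuv x y) (.nuv x y)
    | mem : ∀ x X, PlusOf K (.mem x X) (.mem x X)
    | not : ∀ {ψ : MSOF Δ} {χ}, MinusOf K ψ χ → PlusOf K (.not ψ) χ
    | or : ∀ {ψ₁ ψ₂ : MSOF Δ} {a b c}, PlusOf K ψ₁ a → MinusOf K ψ₁ b → PlusOf K ψ₂ c →
        PlusOf K (.or ψ₁ ψ₂) (.or a (.and b c))
    | and : ∀ {ψ₁ ψ₂ : MSOF Δ} {a b}, PlusOf K ψ₁ a → PlusOf K ψ₂ b →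
        PlusOf K (.and ψ₁ ψ₂) (.and a b)
    | exF : ∀ {x : ℕ} {ψ : MSOF Δ} {a χ} (y : ℕ), y = (MSOF.exF x ψ).maxF + 1 →
        PlusOf K ψ a →
        MinusOf K (.and (.not (.lev x y)) (ψ.substF x y)) χ →
        PlusOf K (.exF x ψ) (.exF x (.and a (.alF y χ)))
    | alF : ∀ {x : ℕ} {ψ : MSOF Δ} {a}, PlusOf K ψ a → PlusOf K (.alF x ψ) (.alF x a)
    | exS : ∀ {X : ℕ} {ψ : MSOF Δ} {a χ} (Y : ℕ), Y = (MSOF.exS X ψ).maxS + 1 →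
        PlusOf K ψ a →
        MinusOf K (.and (lessSet Y X) (ψ.substS X Y)) χ →
        PlusOf K (.exS X ψ) (.exS X (.and a (.alS Y χ)))
    | alS : ∀ {X : ℕ} {ψ : MSOF Δ} {a}, PlusOf K ψ a → PlusOf K (.alS X ψ) (.alS X a)

  /-- `MinusOf K ψ φ` : `φ = ψ⁻`. -/
  inductive MinusOf (K : Type) {Δ : Type} : MSOF Δ → WMSO K Δ → Prop where
    | eqv : ∀ x y, MinusOf K (.eqv x y) (.neq x y)
    | lab : ∀ (a : Δ) x, MinusOf K (.lab a x) (.nlab a x)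
    | lev : ∀ x y, MinusOf K (.lev x y) (.nle x y)
    | nuv : ∀ x y, MinusOf K (.nuv x y) (.nnu x y)
    | mem : ∀ x X, MinusOf K (.mem x X) (.nmem x X)
    | not : ∀ {ψ : MSOF Δ} {χ}, PlusOf K ψ χ → MinusOf K (.not ψ) χ
    | or : ∀ {ψ₁ ψ₂ : MSOF Δ} {a b}, MinusOf K ψ₁ a → MinusOf K ψ₂ b →
        MinusOf K (.or ψ₁ ψ₂) (.and a b)
    | and : ∀ {ψ₁ ψ₂ : MSOF Δ} {a b c}, MinusOf K ψ₁ a → PlusOf K ψ₁ b → MinusOf K ψ₂ c →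
        MinusOf K (.and ψ₁ ψ₂) (.or a (.and b c))
    | exF : ∀ {x : ℕ} {ψ : MSOF Δ} {a}, MinusOf K ψ a → MinusOf K (.exF x ψ) (.alF x a)
    | alF : ∀ {x : ℕ} {ψ : MSOF Δ} {a χ} (y : ℕ), y = (MSOF.alF x ψ).maxF + 1 →
        MinusOf K ψ a →
        MinusOf K (.and (.not (.lev x y)) (.not (ψ.substF x y))) χ →
        MinusOf K (.alF x ψ) (.exF x (.and a (.alF y χ)))
    | exS : ∀ {X : ℕ} {ψ : MSOF Δ} {a}, MinusOf K ψ a → MinusOf K (.exS X ψ) (.alS X a)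
    | alS : ∀ {X : ℕ} {ψ : MSOF Δ} {a χ} (Y : ℕ), Y = (MSOF.alS X ψ).maxS + 1 →
        MinusOf K ψ a →
        MinusOf K (.and (lessSet Y X) (.not (ψ.substS X Y))) χ →
        MinusOf K (.alS X ψ) (.exS X (.and a (.alS Y χ)))
end

/-- A weighted formula is syntactically unambiguous if it is of the form `ψ⁺` or
`ψ⁻` for a classical formula `ψ`. -/
def SyntUnamb {K Δ : Type} (φ : WMSO K Δ) : Prop :=
  ∃ ψ : MSOF Δ, PlusOf K ψ φ ∨ MinusOf K ψ φ

/-- Almost unambiguous formulae: the smallest class containing all constants and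
all syntactically unambiguous formulae which is closed under `∧` and `∨`. -/
inductive AUMSO {K Δ : Type} : WMSO K Δ → Prop where
  | const (k : K) : AUMSO (.const k)
  | unamb {φ : WMSO K Δ} : SyntUnamb φ → AUMSO φ
  | and {φ ψ : WMSO K Δ} : AUMSO φ → AUMSO ψ → AUMSO (.and φ ψ)
  | or {φ ψ : WMSO K Δ} : AUMSO φ → AUMSO ψ → AUMSO (.or φ ψ)

/-- Weakly unambiguous formulae: additionally closed under existential quantification. -/
inductive WUMSO {K Δ : Type} : WMSO K Δ → Prop where
  | const (k : K) : WUMSO (.const k)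
  | unamb {φ : WMSO K Δ} : SyntUnamb φ → WUMSO φ
  | and {φ ψ : WMSO K Δ} : WUMSO φ → WUMSO ψ → WUMSO (.and φ ψ)
  | or {φ ψ : WMSO K Δ} : WUMSO φ → WUMSO ψ → WUMSO (.or φ ψ)
  | exF {x : ℕ} {φ : WMSO K Δ} : WUMSO φ → WUMSO (.exF x φ)
  | exS {X : ℕ} {φ : WMSO K Δ} : WUMSO φ → WUMSO (.exS X φ)

/-- Syntactically restricted MSO: every subformula `∀X.ψ` has `ψ` syntactically
unambiguous and every subformula `∀x.ψ` has `ψ` almost unambiguous. -/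
def SRMSO {K Δ : Type} : WMSO K Δ → Prop
  | .or φ ψ => SRMSO φ ∧ SRMSO ψ
  | .and φ ψ => SRMSO φ ∧ SRMSO ψ
  | .exF _ φ => SRMSO φ
  | .exS _ φ => SRMSO φ
  | .alF _ φ => AUMSO φ ∧ SRMSO φ
  | .alS _ φ => SyntUnamb φ ∧ SRMSO φ
  | _ => True

/-- Syntactically weakly restricted MSO. -/
def SWRMSO {K Δ : Type} : WMSO K Δ → Prop
  | .or φ ψ => SWRMSO φ ∧ SWRMSO ψ
  | .and φ ψ => SWRMSO φ ∧ SWRMSO ψ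
  | .exF _ φ => SWRMSO φ
  | .exS _ φ => SWRMSO φ
  | .alF _ φ => WUMSO φ ∧ SWRMSO φ
  | .alS _ φ => SyntUnamb φ ∧ SWRMSO φ
  | _ => True

/-- Formulae without set quantification. -/
def NoSetQuant {K Δ : Type} : WMSO K Δ → Prop
  | .or φ ψ => NoSetQuant φ ∧ NoSetQuant ψ
  | .and φ ψ => NoSetQuant φ ∧ NoSetQuant ψ
  | .exF _ φ => NoSetQuant φ
  | .alF _ φ => NoSetQuant φ
  | .exS _ _ => False
  | .alS _ _ => False
  | _ => True

/-- First-order fragment of `SRMSO`. -/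
def SRFO {K Δ : Type} (φ : WMSO K Δ) : Prop := SRMSO φ ∧ NoSetQuant φ

/-- `∃X₁.…∃Xₘ.ψ` with `ψ ∈ sRFO(K)`. -/
inductive SREMSO {K Δ : Type} : WMSO K Δ → Prop where
  | base {φ : WMSO K Δ} : SRFO φ → SREMSO φ
  | exS {X : ℕ} {φ : WMSO K Δ} : SREMSO φ → SREMSO (.exS X φ)

/-- A nested word series is `Z`-definable if it is the semantics of a sentence in `Z`. -/
def NWDefinable {K Δ : Type} [CommSemiring K] (Z : WMSO K Δ → Prop)
    (S : NestedWord Δ → K) : Prop :=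
  ∃ φ : WMSO K Δ, Z φ ∧ φ.Sentence ∧ ∀ nw γ1 γ2, φ.sem nw γ1 γ2 = S nw

/-!
A formula is read on nested words whose positions carry marks for the values of its free
variables. The classical formulae then define recognizable languages: automata for nested words
can be determinized, which gives complements and projections. Hence the semantics of an almost
unambiguous formula takes finitely many values, each on a recognizable set, and every formula of
`sRMSO(K)` has a Nivat normal form: a sum, over all labellings of the positions by a finite set,
of a product of weights of the labels times such a recognizable step function. The crucial case is
`∀x.φ` with `φ` almost unambiguous, where the labelling guesses the value of `φ` at every position
and an automaton verifies the guess. A weighted automaton computes a Nivat normal form by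
simulating a deterministic automaton and guessing the labels.

Conversely, the runs of a weighted automaton are encoded by one set variable for each state. The
weight of the transition at a position is then a step function of first-order definable
properties, that is, an almost unambiguous formula, and `∀x` multiplies these weights along the
run. Positions where no state is encoded get weight `0`, so only codes of runs contribute.
-/

open Classical in
/-- The Iverson bracket `[p]`, as an element of the semiring `K`. -/
noncomputable def iverson (K : Type*) [CommSemiring K] (p : Prop) : K := if p then 1 else 0

section Iverson

variable {K ι : Type*} [CommSemiring K]

@[simp]
theorem iverson_of_true {p : Prop} (h : p) : iverson K p = 1 := if_pos h

@[simp]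
theorem iverson_of_false {p : Prop} (h : ¬p) : iverson K p = 0 := if_neg h

theorem iverson_congr {p q : Prop} (h : p ↔ q) : iverson K p = iverson K q :=
  congrArg _ (propext h)

theorem ite_one_zero_eq_iverson (p : Prop) {_ : Decidable p} :
    (if p then 1 else 0) = iverson K p := by
  by_cases hp : p <;> simp [hp]

theorem ite_zero_one_eq_iverson_not (p : Prop) {_ : Decidable p} :
    (if p then 0 else 1) = iverson K (¬p) := by
  by_cases hp : p <;> simp [hp]

theorem iverson_mul_iverson (p q : Prop) : iverson K p * iverson K q = iverson K (p ∧ q) := by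
  by_cases hp : p <;> by_cases hq : q <;> simp [hp, hq]

theorem iverson_add_iverson_not_and (p q : Prop) :
    iverson K p + iverson K (¬p ∧ q) = iverson K (p ∨ q) := by
  by_cases hp : p <;> by_cases hq : q <;> simp [hp, hq]

theorem prod_iverson (s : Finset ι) (p : ι → Prop) :
    ∏ i ∈ s, iverson K (p i) = iverson K (∀ i ∈ s, p i) := by
  classical
  induction s using Finset.induction_on with
  | empty => simp
  | insert a s ha ih =>
    rw [Finset.prod_insert ha, ih, iverson_mul_iverson, Finset.forall_mem_insert]

theorem sum_iverson_of_unique {s : Finset ι} {p : ι → Prop} {i₀ : ι} (h₀ : i₀ ∈ s)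
    (h : ∀ i ∈ s, p i ↔ i = i₀) (k : ι → K) : ∑ i ∈ s, iverson K (p i) * k i = k i₀ := by
  rw [Finset.sum_eq_single_of_mem i₀ h₀, iverson_of_true ((h i₀ h₀).2 rfl), one_mul]
  intro i hi hne
  rw [iverson_of_false (mt (h i hi).1 hne), zero_mul]

theorem sum_iverson_eq_exists {s : Finset ι} {p : ι → Prop}
    (h : ∀ i ∈ s, ∀ j ∈ s, p i → p j → i = j) :
    ∑ i ∈ s, iverson K (p i) = iverson K (∃ i ∈ s, p i) := by
  by_cases hp : ∃ i ∈ s, p i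
  · obtain ⟨i₀, h₀, hp₀⟩ := hp
    rw [iverson_of_true ⟨i₀, h₀, hp₀⟩, Finset.sum_eq_single_of_mem i₀ h₀, iverson_of_true hp₀]
    exact fun i hi hne => iverson_of_false fun hpi => hne (h i hi i₀ h₀ hpi hp₀)
  · rw [iverson_of_false hp]
    exact Finset.sum_eq_zero fun i hi => iverson_of_false fun hpi => hp ⟨i, hi, hpi⟩

-- The summand is the indicator of `i` being the `f`-least element of `s` satisfying `p`.
theorem sum_iverson_mul_prod_not_lt {L : Type*} [LinearOrder L] {s : Finset ι} {f : ι → L}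
    (hf : Set.InjOn f s) (p : ι → Prop) :
    ∑ i ∈ s, iverson K (p i) * ∏ j ∈ s, iverson K (¬(f j < f i ∧ p j)) =
      iverson K (∃ i ∈ s, p i) := by
  classical
  simp only [prod_iverson, iverson_mul_iverson]
  rw [sum_iverson_eq_exists]
  · refine iverson_congr ⟨fun ⟨i, hi, hpi, _⟩ => ⟨i, hi, hpi⟩, fun ⟨i, hi, hpi⟩ => ?_⟩
    obtain ⟨m, hm, hmin⟩ :=
      Finset.exists_min_image (s.filter p) f ⟨i, Finset.mem_filter.2 ⟨hi, hpi⟩⟩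
    rw [Finset.mem_filter] at hm
    exact ⟨m, hm.1, hm.2, fun j hj ⟨hlt, hpj⟩ =>
      hlt.not_ge (hmin j (Finset.mem_filter.2 ⟨hj, hpj⟩))⟩
  · rintro i hi j hj ⟨hpi, hi_min⟩ ⟨hpj, hj_min⟩
    refine hf hi hj (le_antisymm ?_ ?_)
    · exact not_lt.1 fun hlt => hi_min j hj ⟨hlt, hpj⟩
    · exact not_lt.1 fun hlt => hj_min i hi ⟨hlt, hpi⟩

end Iverson

/-! ### Classical semantics of unambiguous formulae -/

section Update

variable {α : Type}

theorem update_eqOn_Iic {g g' : ℕ → α} {m : ℕ} (h : ∀ y ≤ m, g y = g' y) (x : ℕ) (a : α) :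
    ∀ y ≤ m, Function.update g x a y = Function.update g' x a y := by
  intro y hy
  rcases eq_or_ne y x with rfl | hne
  · simp only [Function.update_self]
  · simp only [Function.update_of_ne hne, h y hy]

theorem apply_ite_eq_update (g : ℕ → α) (x y u : ℕ) :
    g (if u = x then y else u) = Function.update g x (g y) u := by
  rw [Function.update_apply, apply_ite g]

theorem update_update_swap (g : ℕ → α) {x y z : ℕ} (hzx : z ≠ x) (hyz : y ≠ z) (a : α) :
    Function.update (Function.update g z a) x (Function.update g z a y) =
      Function.update (Function.update g x (g y)) z a := by
  rw [Function.update_of_ne hyz, Function.update_comm hzx]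

theorem update_update_self_eqOn_Iic (g : ℕ → α) (x : ℕ) {y m : ℕ} (hy : m < y) (a b : α) :
    ∀ z ≤ m, Function.update (Function.update (Function.update g x a) y b) x b z =
      Function.update g x b z := by
  intro z hz
  have hzy : z ≠ y := by omega
  by_cases hzx : z = x <;> simp [hzx, hzy]

end Update

namespace MSOF

variable {Δ : Type}

/-- Classical satisfaction; quantifiers range over positions and sets of positions, as in
`WMSO.sem`. -/
def Holds (nw : NestedWord Δ) : MSOF Δ → (ℕ → ℕ) → (ℕ → Finset ℕ) → Prop
  | eqv x y, g, _ => g x = g y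
  | lab a x, g, _ => nw.letter (g x) = a
  | lev x y, g, _ => g x ≤ g y
  | nuv x y, g, _ => nw.rel (g x) (g y)
  | mem x X, g, G => g x ∈ G X
  | not φ, g, G => ¬Holds nw φ g G
  | or φ ψ, g, G => Holds nw φ g G ∨ Holds nw ψ g G
  | and φ ψ, g, G => Holds nw φ g G ∧ Holds nw ψ g G
  | exF x φ, g, G => ∃ i ∈ Finset.Icc 1 nw.len, Holds nw φ (Function.update g x i) G
  | exS X φ, g, G => ∃ T ∈ (Finset.Icc 1 nw.len).powerset, Holds nw φ g (Function.update G X T)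
  | alF x φ, g, G => ∀ i ∈ Finset.Icc 1 nw.len, Holds nw φ (Function.update g x i) G
  | alS X φ, g, G => ∀ T ∈ (Finset.Icc 1 nw.len).powerset, Holds nw φ g (Function.update G X T)

variable {nw : NestedWord Δ}

theorem holds_congr (ψ : MSOF Δ) {g g' : ℕ → ℕ} {G G' : ℕ → Finset ℕ}
    (hg : ∀ x ≤ ψ.maxF, g x = g' x) (hG : ∀ X ≤ ψ.maxS, G X = G' X) :
    ψ.Holds nw g G ↔ ψ.Holds nw g' G' := by
  induction ψ generalizing g g' G G' with
  | eqv | lab | lev | nuv | mem => simp_all [Holds, maxF, maxS]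
  | not φ ih => exact not_congr (ih hg hG)
  | or φ ψ ihφ ihψ =>
    simp only [maxF, maxS, le_max_iff] at hg hG
    exact or_congr (ihφ (fun x hx => hg x (.inl hx)) fun X hX => hG X (.inl hX))
      (ihψ (fun x hx => hg x (.inr hx)) fun X hX => hG X (.inr hX))
  | and φ ψ ihφ ihψ =>
    simp only [maxF, maxS, le_max_iff] at hg hG
    exact and_congr (ihφ (fun x hx => hg x (.inl hx)) fun X hX => hG X (.inl hX))
      (ihψ (fun x hx => hg x (.inr hx)) fun X hX => hG X (.inr hX))
  | exF z φ ih =>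
    simp only [maxF, le_max_iff] at hg
    exact exists_congr fun i => and_congr_right fun _ =>
      ih (update_eqOn_Iic (fun x hx => hg x (.inr hx)) z i) hG
  | alF z φ ih =>
    simp only [maxF, le_max_iff] at hg
    exact forall₂_congr fun i _ => ih (update_eqOn_Iic (fun x hx => hg x (.inr hx)) z i) hG
  | exS Z φ ih =>
    simp only [maxS, le_max_iff] at hG
    exact exists_congr fun T => and_congr_right fun _ =>
      ih hg (update_eqOn_Iic (fun X hX => hG X (.inr hX)) Z T)
  | alS Z φ ih =>
    simp only [maxS, le_max_iff] at hG
    exact forall₂_congr fun T _ => ih hg (update_eqOn_Iic (fun X hX => hG X (.inr hX)) Z T)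

theorem holds_substF (x : ℕ) {y : ℕ} (ψ : MSOF Δ) (hy : ψ.maxF < y) (g : ℕ → ℕ)
    (G : ℕ → Finset ℕ) :
    (ψ.substF x y).Holds nw g G ↔ ψ.Holds nw (Function.update g x (g y)) G := by
  induction ψ generalizing g G with
  | eqv | lab | lev | nuv | mem => simp only [substF, Holds, apply_ite_eq_update g]
  | not φ ih => exact not_congr (ih hy g G)
  | or φ ψ ihφ ihψ =>
    obtain ⟨hφ, hψ⟩ := max_lt_iff.1 hy
    exact or_congr (ihφ hφ g G) (ihψ hψ g G)
  | and φ ψ ihφ ihψ =>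
    obtain ⟨hφ, hψ⟩ := max_lt_iff.1 hy
    exact and_congr (ihφ hφ g G) (ihψ hψ g G)
  | exF z φ ih =>
    obtain ⟨hz, hφ⟩ := max_lt_iff.1 hy
    rw [substF]
    split_ifs with hzx
    · simp only [hzx, Holds, Function.update_idem]
    · simp only [Holds, ih hφ, update_update_swap g hzx hz.ne']
  | alF z φ ih =>
    obtain ⟨hz, hφ⟩ := max_lt_iff.1 hy
    rw [substF]
    split_ifs with hzx
    · simp only [hzx, Holds, Function.update_idem]
    · simp only [Holds, ih hφ, update_update_swap g hzx hz.ne']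
  | exS Z φ ih => exact exists_congr fun T => and_congr_right fun _ => ih hy g _
  | alS Z φ ih => exact forall₂_congr fun T _ => ih hy g _

theorem holds_substS (X : ℕ) {Y : ℕ} (ψ : MSOF Δ) (hY : ψ.maxS < Y) (g : ℕ → ℕ)
    (G : ℕ → Finset ℕ) :
    (ψ.substS X Y).Holds nw g G ↔ ψ.Holds nw g (Function.update G X (G Y)) := by
  induction ψ generalizing g G with
  | eqv | lab | lev | nuv => rfl
  | mem => simp only [substS, Holds, apply_ite_eq_update G]
  | not φ ih => exact not_congr (ih hY g G)
  | or φ ψ ihφ ihψ =>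
    obtain ⟨hφ, hψ⟩ := max_lt_iff.1 hY
    exact or_congr (ihφ hφ g G) (ihψ hψ g G)
  | and φ ψ ihφ ihψ =>
    obtain ⟨hφ, hψ⟩ := max_lt_iff.1 hY
    exact and_congr (ihφ hφ g G) (ihψ hψ g G)
  | exS Z φ ih =>
    obtain ⟨hZ, hφ⟩ := max_lt_iff.1 hY
    rw [substS]
    split_ifs with hZX
    · simp only [hZX, Holds, Function.update_idem]
    · simp only [Holds, ih hφ, update_update_swap G hZX hZ.ne']
  | alS Z φ ih =>
    obtain ⟨hZ, hφ⟩ := max_lt_iff.1 hY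
    rw [substS]
    split_ifs with hZX
    · simp only [hZX, Holds, Function.update_idem]
    · simp only [Holds, ih hφ, update_update_swap G hZX hZ.ne']
  | exF z φ ih => exact exists_congr fun i => and_congr_right fun _ => ih hY _ G
  | alF z φ ih => exact forall₂_congr fun i _ => ih hY _ G

theorem holds_substF_fresh (x : ℕ) {y : ℕ} (ψ : MSOF Δ) (hy : ψ.maxF < y) (g : ℕ → ℕ)
    (G : ℕ → Finset ℕ) (i j : ℕ) :
    (ψ.substF x y).Holds nw (Function.update (Function.update g x i) y j) G ↔
      ψ.Holds nw (Function.update g x j) G := by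
  rw [holds_substF x ψ hy, Function.update_self]
  exact holds_congr ψ (update_update_self_eqOn_Iic g x hy i j) fun _ _ => rfl

theorem holds_substS_fresh (X : ℕ) {Y : ℕ} (ψ : MSOF Δ) (hY : ψ.maxS < Y) (g : ℕ → ℕ)
    (G : ℕ → Finset ℕ) (S T : Finset ℕ) :
    (ψ.substS X Y).Holds nw g (Function.update (Function.update G X S) Y T) ↔
      ψ.Holds nw g (Function.update G X T) := by
  rw [holds_substS X ψ hY, Function.update_self]
  exact holds_congr ψ (fun _ _ => rfl) (update_update_self_eqOn_Iic G X hY S T)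

end MSOF

open Classical in
/-- The characteristic function of `T`, compared lexicographically; this is the order on sets
of positions that `lessSet` expresses. -/
noncomputable def lexSet (T : Finset ℕ) : Lex (ℕ → Bool) := toLex fun i => decide (i ∈ T)

theorem lexSet_injective : Function.Injective lexSet := by
  intro S T h
  ext i
  simpa [lexSet] using congrFun (congrArg ofLex h) i

theorem lexSet_lt_lexSet {S T : Finset ℕ} :
    lexSet S < lexSet T ↔ ∃ i, (∀ j < i, j ∈ S ↔ j ∈ T) ∧ i ∉ S ∧ i ∈ T := by
  change Pi.Lex _ _ _ _ ↔ _
  simp [Pi.Lex, lexSet, Bool.lt_iff]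

theorem holds_lessSet {Δ : Type} {nw : NestedWord Δ} {Y X : ℕ} (g : ℕ → ℕ) {G : ℕ → Finset ℕ}
    (hY : G Y ⊆ Finset.Icc 1 nw.len) (hX : G X ⊆ Finset.Icc 1 nw.len) :
    (lessSet Y X : MSOF Δ).Holds nw g G ↔ lexSet (G Y) < lexSet (G X) := by
  simp only [lexSet_lt_lexSet, lessSet, MSOF.Holds, Function.update_self, ne_eq,
    not_false_eq_true, Function.update_of_ne, zero_ne_one]
  constructor
  · rintro ⟨i, -, hiX, hiY, hagree⟩
    refine ⟨i, fun j hj => ?_, hiY, hiX⟩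
    by_cases hj' : j ∈ Finset.Icc 1 nw.len
    · rcases hagree j hj' with hle | hiff
      · omega
      · tauto
    · exact iff_of_false (fun h => hj' (hY h)) fun h => hj' (hX h)
  · rintro ⟨i, hagree, hiY, hiX⟩
    refine ⟨i, hX hiX, hiX, hiY, fun j _ => ?_⟩
    rcases le_or_gt i j with hle | hlt
    · exact .inl hle
    · have := hagree j hlt
      tauto

section Unambiguous

variable {K Δ : Type} [CommSemiring K] {nw : NestedWord Δ}

theorem sum_first_position (x : ℕ) {y : ℕ} (ψ : MSOF Δ) (hy : (MSOF.exF x ψ).maxF < y)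
    (g : ℕ → ℕ) (G : ℕ → Finset ℕ) :
    ∑ i ∈ Finset.Icc 1 nw.len, iverson K (ψ.Holds nw (Function.update g x i) G) *
        ∏ j ∈ Finset.Icc 1 nw.len, iverson K (¬(MSOF.and (.not (.lev x y)) (ψ.substF x y)).Holds nw
          (Function.update (Function.update g x i) y j) G) =
      iverson K ((MSOF.exF x ψ).Holds nw g G) := by
  obtain ⟨hxy, hψ⟩ := max_lt_iff.1 hy
  rw [MSOF.Holds, ← sum_iverson_mul_prod_not_lt (Set.injOn_id _)]
  simp only [MSOF.Holds, MSOF.holds_substF_fresh x ψ hψ, Function.update_self,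
    Function.update_of_ne hxy.ne, not_le, id]

theorem sum_first_set (X : ℕ) {Y : ℕ} (ψ : MSOF Δ) (hY : (MSOF.exS X ψ).maxS < Y)
    (g : ℕ → ℕ) (G : ℕ → Finset ℕ) :
    ∑ S ∈ (Finset.Icc 1 nw.len).powerset, iverson K (ψ.Holds nw g (Function.update G X S)) *
        ∏ T ∈ (Finset.Icc 1 nw.len).powerset,
          iverson K (¬(MSOF.and (lessSet Y X) (ψ.substS X Y)).Holds nw g
            (Function.update (Function.update G X S) Y T)) =
      iverson K ((MSOF.exS X ψ).Holds nw g G) := by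
  obtain ⟨hXY, hψ⟩ := max_lt_iff.1 hY
  rw [MSOF.Holds, ← sum_iverson_mul_prod_not_lt lexSet_injective.injOn]
  refine Finset.sum_congr rfl fun S hS => congrArg _ (Finset.prod_congr rfl fun T hT =>
    iverson_congr (not_congr (and_congr ?_ (MSOF.holds_substS_fresh X ψ hψ g G S T))))
  rw [holds_lessSet, Function.update_self, Function.update_of_ne hXY.ne, Function.update_self]
  · exact Iff.rfl
  · simpa using hT
  · simpa [hXY.ne] using hS

mutual

theorem PlusOf.sem_eq {ψ : MSOF Δ} {φ : WMSO K Δ} :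
    PlusOf K ψ φ → ∀ g G, φ.sem nw g G = iverson K (ψ.Holds nw g G)
  | .eqv .., _, _ | .lab .., _, _ | .lev .., _, _ | .nuv .., _, _ | .mem .., _, _ =>
    ite_one_zero_eq_iverson _
  | .not h, g, G => h.sem_eq g G
  | .or ha hb hc, g, G => by
    simp only [WMSO.sem, ha.sem_eq, hb.sem_eq, hc.sem_eq, iverson_mul_iverson,
      iverson_add_iverson_not_and, MSOF.Holds]
  | .and ha hb, g, G => by
    simp only [WMSO.sem, ha.sem_eq, hb.sem_eq, iverson_mul_iverson, MSOF.Holds]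
  | .exF _ hy ha hχ, g, G => by
    simp only [WMSO.sem, ha.sem_eq, hχ.sem_eq]
    exact sum_first_position _ _ (hy ▸ Nat.lt_succ_self _) g G
  | .alF ha, g, G => by simp only [WMSO.sem, ha.sem_eq, prod_iverson, MSOF.Holds]
  | .exS _ hY ha hχ, g, G => by
    simp only [WMSO.sem, ha.sem_eq, hχ.sem_eq]
    exact sum_first_set _ _ (hY ▸ Nat.lt_succ_self _) g G
  | .alS ha, g, G => by simp only [WMSO.sem, ha.sem_eq, prod_iverson, MSOF.Holds]

theorem MinusOf.sem_eq {ψ : MSOF Δ} {φ : WMSO K Δ} :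
    MinusOf K ψ φ → ∀ g G, φ.sem nw g G = iverson K (¬ψ.Holds nw g G)
  | .eqv .., _, _ | .lab .., _, _ | .lev .., _, _ | .nuv .., _, _ | .mem .., _, _ =>
    ite_zero_one_eq_iverson_not _
  | .not h, g, G => by simp only [h.sem_eq, MSOF.Holds, not_not]
  | .or ha hb, g, G => by
    simp only [WMSO.sem, ha.sem_eq, hb.sem_eq, iverson_mul_iverson, MSOF.Holds, not_or]
  | .and (ψ₁ := ψ₁) (ψ₂ := ψ₂) ha hb hc, g, G => by
    have := iverson_add_iverson_not_and (K := K) (¬ψ₁.Holds nw g G) (¬ψ₂.Holds nw g G)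
    rw [not_not] at this
    simp only [WMSO.sem, ha.sem_eq, hb.sem_eq, hc.sem_eq, iverson_mul_iverson, this, MSOF.Holds,
      not_and_or]
  | .exF ha, g, G => by
    simp only [WMSO.sem, ha.sem_eq, prod_iverson, MSOF.Holds, not_exists, not_and]
  | .alF (x := x) (ψ := ψ) _ hy ha hχ, g, G => by
    simp only [WMSO.sem, ha.sem_eq, hχ.sem_eq]
    refine (sum_first_position x ψ.not (hy ▸ Nat.lt_succ_self _) g G).trans (iverson_congr ?_)
    simp only [MSOF.Holds, not_forall, exists_prop]
  | .exS ha, g, G => by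
    simp only [WMSO.sem, ha.sem_eq, prod_iverson, MSOF.Holds, not_exists, not_and]
  | .alS (X := X) (ψ := ψ) _ hY ha hχ, g, G => by
    simp only [WMSO.sem, ha.sem_eq, hχ.sem_eq]
    refine (sum_first_set X ψ.not (hY ▸ Nat.lt_succ_self _) g G).trans (iverson_congr ?_)
    simp only [MSOF.Holds, not_forall, exists_prop]

end

end Unambiguous

/-! ### Deterministic nested word automata -/

/-- What an automaton with state space `P` sees of the nesting when it reads a position: at a
return it is given the state in which it was before reading the matching call. -/
inductive Move (P : Type) : Type where
  | call
  | int
  | ret (p : P)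

/-- Functoriality of `Move` in the state space. -/
def Move.map {P P' : Type} (f : P → P') : Move P → Move P'
  | call => call
  | int => int
  | ret p => ret (f p)

/-- A nested word with its letters forgotten. Unlike for a nested word, the width may be `0`. -/
structure Nesting : Type where
  width : ℕ
  rel : ℕ → ℕ → Prop
  isNestingRel : IsNestingRel width rel

namespace Nesting

variable {s : Nesting} {i i' j j' k a : ℕ}

theorem one_le (h : s.rel i j) : 1 ≤ i := (s.isNestingRel.1 i j h).1

theorem lt (h : s.rel i j) : i < j := (s.isNestingRel.1 i j h).2.1

theorem le_width (h : s.rel i j) : j ≤ s.width := (s.isNestingRel.1 i j h).2.2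

theorem right_unique (h : s.rel i j) (h' : s.rel i j') : j = j' := s.isNestingRel.2.1 i j j' h h'

theorem left_unique (h : s.rel i j) (h' : s.rel i' j) : i = i' := s.isNestingRel.2.2.1 i i' j h h'

theorem not_crossing (h : s.rel i j) (h' : s.rel i' j') (hlt : i < i') : j < i' ∨ j' < j :=
  s.isNestingRel.2.2.2 i j i' j' h h' hlt

theorem not_rel_of_rel (h : s.rel i j) (l : ℕ) : ¬s.rel j l := fun h' => by
  have := s.lt h'
  have := s.not_crossing h h' (s.lt h)
  omega

open Classical in
/-- The move offered at position `j` to an automaton whose state after position `i` is `ρ i`. -/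
noncomputable def move (s : Nesting) {P : Type} (ρ : ℕ → P) (j : ℕ) : Move P :=
  if ∃ l, s.rel j l then .call
  else if h : ∃ i, s.rel i j then .ret (ρ (h.choose - 1))
  else .int

section Move

variable {P P' : Type} {ρ ρ' : ℕ → P}

theorem move_of_call (h : s.rel j i) : s.move ρ j = .call := if_pos ⟨i, h⟩

theorem move_of_return (h : s.rel i j) : s.move ρ j = .ret (ρ (i - 1)) := by
  have hret : ∃ i, s.rel i j := ⟨i, h⟩
  rw [move, if_neg fun ⟨l, hl⟩ => s.not_rel_of_rel h l hl, dif_pos hret,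
    s.left_unique hret.choose_spec h]

theorem move_of_internal (hcall : ¬∃ l, s.rel j l) (hret : ¬∃ i, s.rel i j) :
    s.move ρ j = .int := by
  rw [move, if_neg hcall, dif_neg hret]

theorem map_move (f : P → P') (ρ : ℕ → P) (j : ℕ) :
    (s.move ρ j).map f = s.move (f ∘ ρ) j := by
  unfold move
  split_ifs <;> rfl

theorem move_congr (h : ∀ i, s.rel i j → ρ (i - 1) = ρ' (i - 1)) :
    s.move ρ j = s.move ρ' j := by
  unfold move
  split_ifs with _ hret
  · rfl
  · rw [h _ hret.choose_spec]
  · rfl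

end Move

/-- No arch enters the segment `(a, k]` from the left. -/
def IsClosed (s : Nesting) (a k : ℕ) : Prop := ∀ i j, s.rel i j → a < j → j ≤ k → a < i

theorem isClosed_zero (s : Nesting) (k : ℕ) : s.IsClosed 0 k := fun _ _ h _ _ => s.one_le h

theorem IsClosed.mono {k' : ℕ} (h : s.IsClosed a k) (hk : k' ≤ k) : s.IsClosed a k' :=
  fun i j hij ha hj => h i j hij ha (hj.trans hk)

/-- The segment `(a, k]` is the level of the nesting current at position `k`: either `a + 1` is
the innermost call that is open after position `k`, or `a = 0` and no call after position `1` is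
open. -/
structure IsLevel (s : Nesting) (a k : ℕ) : Prop where
  closed : s.IsClosed a k
  le_of_rel : ∀ i j, s.rel i j → a + 1 < i → i ≤ k → j ≤ k
  eq_zero_or_open : a = 0 ∨ a + 1 ≤ k ∧ ∃ j, s.rel (a + 1) j ∧ k < j

theorem isLevel_zero_width (s : Nesting) : s.IsLevel 0 s.width where
  closed := s.isClosed_zero _
  le_of_rel _ _ h _ _ := s.le_width h
  eq_zero_or_open := .inl rfl

theorem IsLevel.eq_of_call (h : s.IsLevel a (k + 1)) (hcall : s.rel (k + 1) j) : a = k := by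
  have := s.lt hcall
  have := h.le_of_rel _ _ hcall
  rcases h.eq_zero_or_open with _ | _ <;> omega

theorem IsLevel.of_internal (h : s.IsLevel a (k + 1)) (hcall : ¬∃ l, s.rel (k + 1) l)
    (hret : ¬∃ i, s.rel i (k + 1)) : s.IsLevel a k where
  closed := h.closed.mono k.le_succ
  le_of_rel i j hij ha hi := by
    have := h.le_of_rel i j hij ha (by omega)
    have : j ≠ k + 1 := fun hj => hret ⟨i, hj ▸ hij⟩
    omega
  eq_zero_or_open := h.eq_zero_or_open.imp_right fun ⟨_, j, hj, hlt⟩ => by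
    have : a ≠ k := fun ha => hcall ⟨j, ha ▸ hj⟩
    exact ⟨by omega, j, hj, by omega⟩

theorem IsLevel.of_return (h : s.IsLevel a (k + 1)) (hret : s.rel i (k + 1)) :
    s.IsLevel a (i - 1) where
  closed := h.closed.mono (by have := s.lt hret; omega)
  le_of_rel i' j' hij ha hi := by
    have := s.lt hret
    have := h.le_of_rel i' j' hij ha (by omega)
    have := s.not_crossing hij hret (by omega)
    omega
  eq_zero_or_open := h.eq_zero_or_open.imp_right fun ⟨_, j, hj, hlt⟩ => by
    have := h.closed i _ hret (by omega) le_rfl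
    have := s.lt hret
    have : a + 1 ≠ i := fun ha => hlt.ne (s.right_unique hret (ha ▸ hj))
    exact ⟨by omega, j, hj, by omega⟩

theorem isLevel_before_return (hret : s.rel i (k + 1)) : s.IsLevel (i - 1) k where
  closed i' j' hij hi hj := by
    have := s.one_le hret
    by_contra hlt
    have := s.not_crossing hij hret (by omega)
    omega
  le_of_rel i' j' hij hi hi' := by
    have := s.one_le hret
    have := s.not_crossing hret hij (by omega)
    omega
  eq_zero_or_open := by
    have hone := s.one_le hret
    have := s.lt hret
    rw [Nat.sub_add_cancel hone]
    exact .inr ⟨by omega, _, hret, by omega⟩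

end Nesting

/-- A deterministic nested word automaton over the (possibly infinite) alphabet `Γ`. -/
structure DetNWA (Γ : Type) : Type 1 where
  P : Type
  [fintypeP : Fintype P]
  start : P
  next : P → Move P → Γ → P

attribute [instance] DetNWA.fintypeP

namespace DetNWA

variable {Γ : Type} (D : DetNWA Γ) {s : Nesting} {σ σ' : ℕ → Γ} {a j k m : ℕ} {p : D.P}

/-- The state after position `j`, if the earlier states are given by `ρ`. -/
noncomputable def step (s : Nesting) (σ : ℕ → Γ) (ρ : ℕ → D.P) (j : ℕ) : D.P :=
  D.next (ρ (j - 1)) (s.move ρ j) (σ j)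

theorem step_congr {ρ ρ' : ℕ → D.P} (hpred : ρ (j - 1) = ρ' (j - 1))
    (hcall : ∀ i, s.rel i j → ρ (i - 1) = ρ' (i - 1)) (hσ : σ j = σ' j) :
    D.step s σ ρ j = D.step s σ' ρ' j := by
  rw [step, step, hpred, Nesting.move_congr hcall, hσ]

/-- The run that is in state `p` after position `a`. A return after `a` whose call is not after
`a` is served with `p`. -/
noncomputable def runFrom (s : Nesting) (σ : ℕ → Γ) (a : ℕ) (p : D.P) (k : ℕ) : D.P :=
  if k ≤ a then p else D.step s σ (fun i => if i < k then runFrom s σ a p i else p) k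
termination_by k

/-- The run from the start state. -/
noncomputable def run (s : Nesting) (σ : ℕ → Γ) : ℕ → D.P := D.runFrom s σ 0 D.start

theorem runFrom_of_le (h : k ≤ a) : D.runFrom s σ a p k = p := by
  rw [runFrom, if_pos h]

theorem runFrom_eq_step (h : a < k) :
    D.runFrom s σ a p k = D.step s σ (D.runFrom s σ a p) k := by
  rw [runFrom, if_neg h.not_ge]
  refine D.step_congr (if_pos (by omega)) (fun i hi => if_pos ?_) rfl
  have := s.lt hi
  omega

theorem runFrom_succ (h : a ≤ k) : D.runFrom s σ a p (k + 1) =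
    D.next (D.runFrom s σ a p k) (s.move (D.runFrom s σ a p) (k + 1)) (σ (k + 1)) :=
  D.runFrom_eq_step (Nat.lt_succ_of_le h)

theorem eq_runFrom_of_step {ρ : ℕ → D.P} (hclosed : s.IsClosed a m)
    (hρ : ∀ j, a < j → j ≤ m → ρ j = D.step s σ ρ j) (hak : a ≤ k) (hkm : k ≤ m) :
    ρ k = D.runFrom s σ a (ρ a) k := by
  induction k using Nat.strong_induction_on with
  | _ k ih =>
    rcases hak.eq_or_lt with rfl | hlt
    · rw [runFrom_of_le D le_rfl]
    · rw [hρ k hlt hkm, runFrom_eq_step D hlt]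
      refine D.step_congr (ih _ (by omega) (by omega) (by omega)) (fun i hi => ?_) rfl
      have := hclosed i k hi hlt hkm
      have := s.lt hi
      exact ih _ (by omega) (by omega) (by omega)

theorem runFrom_congr (hclosed : s.IsClosed a m) (hσ : ∀ j, a < j → j ≤ m → σ j = σ' j)
    (hak : a ≤ m) : D.runFrom s σ a p m = D.runFrom s σ' a p m := by
  have hstep : ∀ j, a < j → j ≤ m →
      D.runFrom s σ a p j = D.step s σ' (D.runFrom s σ a p) j := fun j haj hjm =>
    (D.runFrom_eq_step haj).trans (D.step_congr rfl (fun _ _ => rfl) (hσ j haj hjm))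
  rw [D.eq_runFrom_of_step hclosed hstep hak le_rfl, D.runFrom_of_le le_rfl]

theorem runFrom_runFrom {b : ℕ} (hclosed : s.IsClosed b m) (hab : a ≤ b) (hbm : b ≤ m) :
    D.runFrom s σ b (D.runFrom s σ a p b) m = D.runFrom s σ a p m :=
  (D.eq_runFrom_of_step hclosed (fun _ hj _ => D.runFrom_eq_step (hab.trans_lt hj)) hbm
    le_rfl).symm

theorem run_zero : D.run s σ 0 = D.start := D.runFrom_of_le le_rfl

theorem run_succ : D.run s σ (k + 1) =
    D.next (D.run s σ k) (s.move (D.run s σ) (k + 1)) (σ (k + 1)) :=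
  D.runFrom_succ k.zero_le

theorem eq_run_of_step {ρ : ℕ → D.P} (h₀ : ρ 0 = D.start)
    (hρ : ∀ j, 0 < j → j ≤ m → ρ j = D.step s σ ρ j) (hk : k ≤ m) : ρ k = D.run s σ k := by
  rw [run, ← h₀]
  exact D.eq_runFrom_of_step (s.isClosed_zero m) hρ k.zero_le hk

theorem run_congr (hσ : ∀ j, 0 < j → j ≤ m → σ j = σ' j) : D.run s σ m = D.run s σ' m :=
  D.runFrom_congr (s.isClosed_zero m) hσ m.zero_le

end DetNWA

/-- The function `F` of nestings with letters is computed by a deterministic nested word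
automaton, which reads off the value from its final state. For `α = Prop` this is recognizability
of a language of nested words. -/
def Recognizable {Γ α : Type} (F : Nesting → (ℕ → Γ) → α) : Prop :=
  ∃ (D : DetNWA Γ) (out : D.P → α), ∀ s σ, F s σ = out (D.run s σ s.width)

namespace Recognizable

variable {Γ Γ' α β γ : Type}

theorem of_step {P : Type} [Finite P] (start : P) (next : P → Move P → Γ → P)
    {ρ : Nesting → (ℕ → Γ) → ℕ → P} (h₀ : ∀ s σ, ρ s σ 0 = start)
    (hρ : ∀ s σ k, ρ s σ (k + 1) = next (ρ s σ k) (s.move (ρ s σ) (k + 1)) (σ (k + 1))) :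
    Recognizable fun s σ => ρ s σ s.width := by
  have := Fintype.ofFinite P
  refine ⟨⟨P, start, next⟩, id, fun s σ => ?_⟩
  refine DetNWA.eq_run_of_step ⟨P, start, next⟩ (h₀ s σ) (fun j hj _ => ?_) le_rfl
  obtain ⟨k, rfl⟩ := Nat.exists_eq_succ_of_ne_zero hj.ne'
  exact hρ s σ k

theorem final_state (D : DetNWA Γ) : Recognizable fun s σ => D.run s σ s.width :=
  ⟨D, id, fun _ _ => rfl⟩

theorem congr_letters {F : Nesting → (ℕ → Γ) → α} (hF : Recognizable F) {s : Nesting}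
    {σ σ' : ℕ → Γ} (h : ∀ j, 0 < j → j ≤ s.width → σ j = σ' j) : F s σ = F s σ' := by
  obtain ⟨D, out, hD⟩ := hF
  rw [hD, hD, D.run_congr h]

theorem map (f : α → β) {F : Nesting → (ℕ → Γ) → α} (hF : Recognizable F) :
    Recognizable fun s σ => f (F s σ) := by
  obtain ⟨D, out, hD⟩ := hF
  exact ⟨D, f ∘ out, fun s σ => congrArg f (hD s σ)⟩

theorem comap (h : Γ' → Γ) {F : Nesting → (ℕ → Γ) → α} (hF : Recognizable F) :
    Recognizable fun s (σ : ℕ → Γ') => F s fun j => h (σ j) := by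
  obtain ⟨D, out, hD⟩ := hF
  simp only [hD]
  refine map out (of_step D.start (fun p m c => D.next p m (h c)) (fun s σ => ?_) fun s σ k => ?_)
  · exact D.run_zero
  · exact D.run_succ

theorem const (c : α) : Recognizable fun (_ : Nesting) (_ : ℕ → Γ) => c :=
  map (fun _ => c) (of_step () (fun _ _ _ => ()) (ρ := fun _ _ _ => ()) (fun _ _ => rfl)
    fun _ _ _ => rfl)

theorem prodMk {F : Nesting → (ℕ → Γ) → α} {G : Nesting → (ℕ → Γ) → β} (hF : Recognizable F)
    (hG : Recognizable G) : Recognizable fun s σ => (F s σ, G s σ) := by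
  obtain ⟨D, outD, hD⟩ := hF
  obtain ⟨E, outE, hE⟩ := hG
  simp only [hD, hE]
  refine map (Prod.map outD outE) (of_step (P := D.P × E.P) (D.start, E.start)
    (fun p m c => (D.next p.1 (m.map Prod.fst) c, E.next p.2 (m.map Prod.snd) c))
    (ρ := fun s σ k => (D.run s σ k, E.run s σ k)) (fun s σ => ?_) fun s σ k => ?_)
  · exact Prod.ext D.run_zero E.run_zero
  · simp only [Nesting.map_move, D.run_succ, E.run_succ]
    rfl

theorem map₂ (f : α → β → γ) {F : Nesting → (ℕ → Γ) → α} {G : Nesting → (ℕ → Γ) → β}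
    (hF : Recognizable F) (hG : Recognizable G) : Recognizable fun s σ => f (F s σ) (G s σ) :=
  (hF.prodMk hG).map fun p => f p.1 p.2

theorem not {F : Nesting → (ℕ → Γ) → Prop} (hF : Recognizable F) :
    Recognizable fun s σ => ¬F s σ := hF.map Not

theorem and {F G : Nesting → (ℕ → Γ) → Prop} (hF : Recognizable F) (hG : Recognizable G) :
    Recognizable fun s σ => F s σ ∧ G s σ := hF.map₂ And hG

theorem or {F G : Nesting → (ℕ → Γ) → Prop} (hF : Recognizable F) (hG : Recognizable G) :
    Recognizable fun s σ => F s σ ∨ G s σ := hF.map₂ Or hG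

theorem values [Finite α] (f : Γ → α) :
    Recognizable fun s σ => {c | ∃ j ∈ Finset.Icc 1 s.width, f (σ j) = c} := by
  refine of_step ∅ (fun V _ c => insert (f c) V)
    (ρ := fun _ σ k => {c | ∃ j ∈ Finset.Icc 1 k, f (σ j) = c}) (fun _ σ => ?_) fun _ σ k => ?_
  · simp
  · ext c
    simp [← Finset.insert_Icc_right_eq_Icc_add_one, eq_comm]

theorem exists_position (p : Γ → Prop) :
    Recognizable fun s σ => ∃ j ∈ Finset.Icc 1 s.width, p (σ j) := by
  simpa using (values p).map (True ∈ ·)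

theorem exists_lt (p q : Γ → Prop) :
    Recognizable fun s σ =>
      ∃ j ∈ Finset.Icc 1 s.width, q (σ j) ∧ ∃ i ∈ Finset.Ico 1 j, p (σ i) := by
  refine map Prod.snd (of_step (P := Prop × Prop) (False, False)
    (fun x _ c => (x.1 ∨ p c, x.2 ∨ q c ∧ x.1))
    (ρ := fun _ σ k => (∃ i ∈ Finset.Ico 1 (k + 1), p (σ i),
      ∃ j ∈ Finset.Icc 1 k, q (σ j) ∧ ∃ i ∈ Finset.Ico 1 j, p (σ i)))
    (fun _ σ => ?_) fun _ σ k => ?_)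
  · simp
  · simp only [← Finset.insert_Icc_right_eq_Icc_add_one, Finset.exists_mem_insert,
      ← Finset.insert_Ico_right_eq_Ico_add_one, Nat.le_add_left, or_comm]

end Recognizable

/-- The automaton that searches an arch whose call satisfies `p` and whose return satisfies `q`.
The first component of its state tells whether `p` holds at the innermost open call, the second
one whether an arch has been found. -/
def DetNWA.archFinder {Γ : Type} (p q : Γ → Prop) : DetNWA Γ where
  P := Prop × Prop
  start := (False, False)
  next
    | x, .call, c => (p c, x.2)
    | x, .int, _ => x
    | x, .ret r, c => (r.1, x.2 ∨ x.1 ∧ q c)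

section ArchFinder

variable {Γ : Type} {p q : Γ → Prop} {s : Nesting} {σ : ℕ → Γ} {i j : ℕ}

open DetNWA

theorem archFinder_fst (hij : s.rel i j) (k : ℕ) (hik : i ≤ k) (hkj : k < j)
    (hlevel : s.IsLevel (i - 1) k) : ((archFinder p q).run s σ k).1 ↔ p (σ i) := by
  induction k using Nat.strong_induction_on with
  | _ k ih =>
    obtain ⟨l, rfl⟩ := Nat.exists_eq_add_one.2 ((s.one_le hij).trans hik)
    rw [run_succ]
    by_cases hcall : ∃ m, s.rel (l + 1) m
    · have := hlevel.eq_of_call hcall.choose_spec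
      have hi : i = l + 1 := by have := s.one_le hij; omega
      rw [s.move_of_call hcall.choose_spec, hi]
      rfl
    have hil : i ≤ l := by have : i ≠ l + 1 := fun h => hcall ⟨j, h ▸ hij⟩; omega
    by_cases hret : ∃ i', s.rel i' (l + 1)
    · obtain ⟨i', hi'⟩ := hret
      rw [s.move_of_return hi']
      have := s.lt hi'
      have := hlevel.closed i' _ hi' (by omega) le_rfl
      have : i' ≠ i := fun h => hkj.ne (s.right_unique hi' (h ▸ hij))
      exact ih _ (by omega) (by omega) (by omega) (hlevel.of_return hi')
    · rw [s.move_of_internal hcall hret]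
      exact ih _ (by omega) hil (by omega) (hlevel.of_internal hcall hret)

theorem archFinder_snd (k : ℕ) : ((archFinder p q).run s σ k).2 ↔
    ∃ i j, s.rel i j ∧ j ≤ k ∧ p (σ i) ∧ q (σ j) := by
  induction k with
  | zero =>
    rw [run_zero]
    refine iff_of_false id fun ⟨i, j, hij, hj, _⟩ => ?_
    have := s.lt hij
    omega
  | succ k ih =>
    rw [run_succ]
    by_cases hret : ∃ i, s.rel i (k + 1)
    · obtain ⟨i, hi⟩ := hret
      have := s.lt hi
      rw [s.move_of_return hi]
      have := s.one_le hi
      refine (or_congr ih (and_congr_left' (archFinder_fst hi k (by omega) (by omega)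
        (s.isLevel_before_return hi)))).trans ⟨?_, fun ⟨i', j', h, hj', hpq⟩ => ?_⟩
      · rintro (⟨i', j', h, hj', hpq⟩ | hpq)
        exacts [⟨i', j', h, by omega, hpq⟩, ⟨i, k + 1, hi, le_rfl, hpq⟩]
      · rcases hj'.eq_or_lt with rfl | hlt
        · exact .inr (s.left_unique h hi ▸ hpq)
        · exact .inl ⟨i', j', h, by omega, hpq⟩
    · have hsnd : ((archFinder p q).next ((archFinder p q).run s σ k)
          (s.move ((archFinder p q).run s σ) (k + 1)) (σ (k + 1))).2 =
          ((archFinder p q).run s σ k).2 := by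
        by_cases hcall : ∃ m, s.rel (k + 1) m
        · rw [s.move_of_call hcall.choose_spec]
          rfl
        · rw [s.move_of_internal hcall hret]
          rfl
      rw [hsnd, ih]
      refine exists₂_congr fun i j => and_congr_right fun hij => and_congr_left' ?_
      have : j ≠ k + 1 := fun h => hret ⟨i, h ▸ hij⟩
      omega

theorem Recognizable.exists_arch (p q : Γ → Prop) :
    Recognizable fun s σ => ∃ i j, s.rel i j ∧ p (σ i) ∧ q (σ j) := by
  refine ⟨archFinder p q, Prod.snd, fun s σ => propext ?_⟩
  rw [archFinder_snd]
  exact exists₂_congr fun i j => and_congr_right fun h => (and_iff_right (s.le_width h)).symm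

end ArchFinder

section Projection

variable {Γ B : Type} {D : DetNWA (Γ × B)} {s : Nesting} {σ : ℕ → Γ} {a i j k : ℕ} {p q : D.P}

namespace DetNWA

/-- Some labelling of the letters takes `D` from state `p` after position `a` to state `q` after
position `k`. -/
def Reaches (D : DetNWA (Γ × B)) (s : Nesting) (σ : ℕ → Γ) (a k : ℕ) (p q : D.P) : Prop :=
  ∃ τ : ℕ → B, D.runFrom s (fun j => (σ j, τ j)) a p k = q

theorem reaches_self [Nonempty B] : D.Reaches s σ a a p q ↔ p = q := by
  simp only [Reaches, D.runFrom_of_le le_rfl, exists_const]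

theorem reaches_succ_of_call (hcall : s.rel (k + 1) j) :
    D.Reaches s σ k (k + 1) p q ↔ ∃ b, q = D.next p .call (σ (k + 1), b) := by
  simp only [Reaches, D.runFrom_succ le_rfl, s.move_of_call hcall, D.runFrom_of_le le_rfl]
  exact ⟨fun ⟨τ, h⟩ => ⟨τ (k + 1), h.symm⟩, fun ⟨b, h⟩ => ⟨fun _ => b, h.symm⟩⟩

theorem reaches_succ_of_internal (hcall : ¬∃ l, s.rel (k + 1) l) (hret : ¬∃ i, s.rel i (k + 1))
    (hclosed : s.IsClosed a k) (hak : a ≤ k) :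
    D.Reaches s σ a (k + 1) p q ↔
      ∃ r b, D.Reaches s σ a k p r ∧ q = D.next r .int (σ (k + 1), b) := by
  simp only [Reaches, D.runFrom_succ hak, s.move_of_internal hcall hret]
  refine ⟨fun ⟨τ, h⟩ => ⟨_, τ (k + 1), ⟨τ, rfl⟩, h.symm⟩, ?_⟩
  rintro ⟨_, b, ⟨τ, rfl⟩, rfl⟩
  refine ⟨Function.update τ (k + 1) b, ?_⟩
  rw [Function.update_self, D.runFrom_congr hclosed (fun j _ hj => ?_) hak]
  rw [Function.update_of_ne (by omega)]

theorem reaches_succ_of_return (hret : s.rel i (k + 1)) (hclosed : s.IsClosed a (i - 1))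
    (hai : a < i) :
    D.Reaches s σ a (k + 1) p q ↔ ∃ r r' b, D.Reaches s σ a (i - 1) p r ∧
      D.Reaches s σ (i - 1) k r r' ∧ q = D.next r' (.ret r) (σ (k + 1), b) := by
  have hik := s.lt hret
  have hinner := (s.isLevel_before_return hret).closed
  simp only [Reaches, D.runFrom_succ (show a ≤ k by omega), s.move_of_return hret]
  constructor
  · rintro ⟨τ, h⟩
    exact ⟨_, _, τ (k + 1), ⟨τ, rfl⟩,
      ⟨τ, D.runFrom_runFrom hinner (by omega) (by omega)⟩, h.symm⟩
  · rintro ⟨_, _, b, ⟨τ, rfl⟩, ⟨τ', rfl⟩, rfl⟩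
    let μ : ℕ → B := fun j => if j < i then τ j else if j ≤ k then τ' j else b
    have hμ : D.runFrom s (fun j => (σ j, μ j)) a p (i - 1) =
        D.runFrom s (fun j => (σ j, τ j)) a p (i - 1) := by
      refine D.runFrom_congr hclosed (fun j _ hj => ?_) (by omega)
      rw [show μ j = τ j from if_pos (by omega)]
    refine ⟨μ, ?_⟩
    rw [← D.runFrom_runFrom hinner (show a ≤ i - 1 by omega) (by omega), hμ,
      show μ (k + 1) = b from (if_neg (by omega)).trans (if_neg (by omega)),
      D.runFrom_congr hinner (fun j hij hjk => ?_) (by omega)]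
    rw [show μ j = τ' j from (if_neg (by omega)).trans (if_pos hjk)]

/-- The subset automaton that guesses the labels read by `D`. Its state is the relation between
the states of `D` at the beginning of the current level and the states that `D` reaches from
there. -/
def project (D : DetNWA (Γ × B)) : DetNWA Γ where
  P := Set (D.P × D.P)
  start := {x | x.1 = x.2}
  next
    | _, .call, c => {x | ∃ b, x.2 = D.next x.1 .call (c, b)}
    | S, .int, c => {x | ∃ r b, (x.1, r) ∈ S ∧ x.2 = D.next r .int (c, b)}
    | S, .ret R, c =>
      {x | ∃ r r' b, (x.1, r) ∈ R ∧ (r, r') ∈ S ∧ x.2 = D.next r' (.ret r) (c, b)}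

theorem run_project [Nonempty B] (hlevel : s.IsLevel a k) :
    D.project.run s σ k = ({x | D.Reaches s σ a k x.1 x.2} : Set (D.P × D.P)) := by
  induction k using Nat.strong_induction_on generalizing a with
  | _ k ih =>
    rcases k with _ | k
    · have ha : a = 0 := hlevel.eq_zero_or_open.elim id fun h => by omega
      rw [run_zero, ha]
      exact Set.ext fun x => reaches_self.symm
    have hak : a ≤ k := by rcases hlevel.eq_zero_or_open with h | h <;> omega
    rw [run_succ]
    by_cases hcall : ∃ l, s.rel (k + 1) l
    · rw [s.move_of_call hcall.choose_spec, hlevel.eq_of_call hcall.choose_spec]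
      exact Set.ext fun x => (reaches_succ_of_call hcall.choose_spec).symm
    by_cases hret : ∃ i, s.rel i (k + 1)
    · obtain ⟨i, hi⟩ := hret
      have := s.lt hi
      have houter := hlevel.of_return hi
      rw [s.move_of_return hi, ih k k.lt_succ_self (s.isLevel_before_return hi),
        ih (i - 1) (by omega) houter]
      exact Set.ext fun x => (reaches_succ_of_return hi houter.closed
        (hlevel.closed i _ hi (by omega) le_rfl)).symm
    · have hprev := hlevel.of_internal hcall hret
      rw [s.move_of_internal hcall hret, ih k k.lt_succ_self hprev]
      exact Set.ext fun x => (reaches_succ_of_internal hcall hret hprev.closed hak).symm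

end DetNWA

theorem Recognizable.exists_labelling [Nonempty B] {F : Nesting → (ℕ → Γ × B) → Prop}
    (hF : Recognizable F) : Recognizable fun s σ => ∃ τ : ℕ → B, F s fun j => (σ j, τ j) := by
  obtain ⟨D, out, hD⟩ := hF
  refine ⟨D.project, fun (S : Set (D.P × D.P)) => ∃ q, (D.start, q) ∈ S ∧ out q,
    fun s σ => propext ?_⟩
  rw [DetNWA.run_project s.isLevel_zero_width]
  simp only [hD]
  exact ⟨fun ⟨τ, h⟩ => ⟨_, ⟨τ, rfl⟩, h⟩, fun ⟨_, ⟨τ, hτ⟩, h⟩ =>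
    ⟨τ, (congrArg out hτ).mpr h⟩⟩

end Projection

namespace Recognizable

variable {Γ : Type}

theorem exists_set {F : Nesting → (ℕ → Γ × Prop) → Prop} (hF : Recognizable F) :
    Recognizable fun s σ =>
      ∃ T ∈ (Finset.Icc 1 s.width).powerset, F s fun j => (σ j, j ∈ T) := by
  convert hF.exists_labelling using 3 with s σ
  refine ⟨fun ⟨T, _, h⟩ => ⟨(· ∈ T), h⟩, fun ⟨τ, h⟩ => ?_⟩
  classical
  refine ⟨(Finset.Icc 1 s.width).filter τ, by simp, ?_⟩
  rwa [hF.congr_letters (σ' := fun j => (σ j, τ j))]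
  intro j hj hjs
  simp [hjs, Nat.one_le_iff_ne_zero, hj.ne']

theorem exists_unique_position (p : Γ → Prop) :
    Recognizable fun s σ =>
      ∃ x ∈ Finset.Icc 1 s.width, ∀ j ∈ Finset.Icc 1 s.width, p (σ j) ↔ j = x := by
  convert (exists_position p).and (exists_lt p p).not using 3 with s σ
  constructor
  · rintro ⟨x, hx, h⟩
    refine ⟨⟨x, hx, (h x hx).2 rfl⟩, fun ⟨j, hj, hpj, i, hi, hpi⟩ => ?_⟩
    rw [Finset.mem_Icc] at hj
    rw [Finset.mem_Ico] at hi
    have hj := (h j (Finset.mem_Icc.2 hj)).1 hpj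
    have hi := (h i (Finset.mem_Icc.2 ⟨hi.1, by omega⟩)).1 hpi
    omega
  · rintro ⟨⟨x, hx, hpx⟩, hlt⟩
    have hmin : ∀ i ∈ Finset.Icc 1 s.width, ∀ j ∈ Finset.Icc 1 s.width,
        p (σ i) → p (σ j) → j ≤ i := fun i hi j hj hpi hpj => not_lt.1 fun h =>
      hlt ⟨j, hj, hpj, i, Finset.mem_Ico.2 ⟨(Finset.mem_Icc.1 hi).1, h⟩, hpi⟩
    exact ⟨x, hx, fun j hj => ⟨fun hpj => le_antisymm (hmin x hx j hj hpx hpj)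
      (hmin j hj x hx hpj hpx), fun h => h ▸ hpx⟩⟩

theorem exists_mark {F : Nesting → (ℕ → Γ × Prop) → Prop} (hF : Recognizable F) :
    Recognizable fun s σ => ∃ x ∈ Finset.Icc 1 s.width, F s fun j => (σ j, j = x) := by
  convert ((exists_unique_position Prod.snd).and hF).exists_labelling using 3 with s σ
  constructor
  · rintro ⟨x, hx, h⟩
    exact ⟨(· = x), ⟨x, hx, fun _ _ => Iff.rfl⟩, h⟩
  · rintro ⟨τ, ⟨x, hx, hτ⟩, h⟩
    refine ⟨x, hx, ?_⟩
    rwa [hF.congr_letters (σ' := fun j => (σ j, τ j))]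
    exact fun j hj hjs => congrArg _ (propext (hτ j (Finset.mem_Icc.2 ⟨hj, hjs⟩)).symm)

end Recognizable

/-! ### Sums over labellings -/

section LabelAt

variable {B B' : Type} [Inhabited B] [Inhabited B'] {n j : ℕ}

/-- The label of position `j` in a labelling of the positions `1, …, n`. -/
def labelAt (τ : Fin n → B) (j : ℕ) : B :=
  if h : j - 1 < n then τ ⟨j - 1, h⟩ else default

theorem labelAt_succ (τ : Fin n → B) (i : Fin n) : labelAt τ (i + 1) = τ i := dif_pos i.2

theorem exists_fin_succ_eq (hj : 0 < j) (hjn : j ≤ n) : ∃ i : Fin n, j = i + 1 :=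
  ⟨⟨j - 1, by omega⟩, by simp only; omega⟩

theorem labelAt_comp (f : B → B') (τ : Fin n → B) (hj : 0 < j) (hjn : j ≤ n) :
    labelAt (fun i => f (τ i)) j = f (labelAt τ j) := by
  obtain ⟨i, rfl⟩ := exists_fin_succ_eq hj hjn
  rw [labelAt_succ, labelAt_succ]

theorem labelAt_restrict (f : ℕ → B) (hj : 0 < j) (hjn : j ≤ n) :
    labelAt (fun i : Fin n => f (i + 1)) j = f j := by
  obtain ⟨i, rfl⟩ := exists_fin_succ_eq hj hjn
  rw [labelAt_succ]

theorem prod_Icc_one_eq_prod_fin {M : Type} [CommMonoid M] (n : ℕ) (f : ℕ → M) :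
    ∏ j ∈ Finset.Icc 1 n, f j = ∏ i : Fin n, f (i + 1) := by
  rw [← Finset.Ico_add_one_right_eq_Icc, Finset.prod_Ico_eq_prod_range, Finset.prod_range]
  simp only [add_comm 1]
  rfl

end LabelAt

/-- Nivat normal form: the weighted sum, over all labellings of the positions, of a recognizable
function of the labelled nested word. -/
def NivatForm {K Γ : Type} [CommSemiring K] (F : Nesting → (ℕ → Γ) → K) : Prop :=
  ∃ (B : Type) (_ : Fintype B) (_ : Inhabited B) (w : B → K) (G : Nesting → (ℕ → Γ × B) → K),
    Recognizable G ∧ ∀ s σ, F s σ =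
      ∑ τ : Fin s.width → B, (∏ i, w (τ i)) * G s fun j => (σ j, labelAt τ j)

theorem Recognizable.nivatForm {K Γ : Type} [CommSemiring K] {F : Nesting → (ℕ → Γ) → K}
    (hF : Recognizable F) : NivatForm F :=
  ⟨Unit, inferInstance, inferInstance, fun _ => 1, _, hF.comap Prod.fst, fun s σ => by simp⟩

namespace NivatForm

variable {K Γ Γ' : Type} [CommSemiring K]

theorem comap {F : Nesting → (ℕ → Γ) → K} (hF : NivatForm F) (f : Γ' → Γ) :
    NivatForm fun s (σ : ℕ → Γ') => F s fun j => f (σ j) := by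
  obtain ⟨B, _, _, w, G, hG, h⟩ := hF
  exact ⟨B, _, _, w, _, hG.comap fun c : Γ' × B => (f c.1, c.2), fun s σ => h s _⟩

theorem congr_letters {F : Nesting → (ℕ → Γ) → K} (hF : NivatForm F) {s : Nesting}
    {σ σ' : ℕ → Γ} (h : ∀ j, 0 < j → j ≤ s.width → σ j = σ' j) : F s σ = F s σ' := by
  obtain ⟨B, _, _, w, G, hG, hF⟩ := hF
  rw [hF, hF]
  refine Finset.sum_congr rfl fun τ _ => congrArg _ (hG.congr_letters fun j hj hjs => ?_)
  rw [h j hj hjs]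

theorem sum_pair {B C : Type} [Fintype B] [Fintype C] {n : ℕ} (f : (Fin n → B) → (Fin n → C) → K) :
    ∑ τ : Fin n → B, ∑ τ' : Fin n → C, f τ τ' =
      ∑ τ : Fin n → B × C, f (fun i => (τ i).1) fun i => (τ i).2 := by
  rw [← Fintype.sum_prod_type', ← (Equiv.arrowProdEquivProdArrow _ _ _).sum_comp]
  rfl

theorem sum_labellings {C : Type} [Fintype C] [Inhabited C] {F : Nesting → (ℕ → Γ × C) → K}
    (hF : NivatForm F) :
    NivatForm fun s σ => ∑ τ : Fin s.width → C, F s fun j => (σ j, labelAt τ j) := by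
  obtain ⟨B, _, _, w, G, hG, h⟩ := hF
  have hG' := hG.comap fun c : Γ × C × B => ((c.1, c.2.1), c.2.2)
  refine ⟨C × B, inferInstance, inferInstance, fun c => w c.2, _, hG', fun s σ => ?_⟩
  simp only [h, sum_pair]
  refine Finset.sum_congr rfl fun τ _ => congrArg _ (hG.congr_letters fun j hj hjs => ?_)
  rw [labelAt_comp Prod.fst τ hj hjs, labelAt_comp Prod.snd τ hj hjs]

theorem mul {F F' : Nesting → (ℕ → Γ) → K} (hF : NivatForm F) (hF' : NivatForm F') :
    NivatForm fun s σ => F s σ * F' s σ := by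
  obtain ⟨B, _, _, w, G, hG, h⟩ := hF
  obtain ⟨B', _, _, w', G', hG', h'⟩ := hF'
  have hGG' := (hG.comap fun c : Γ × B × B' => (c.1, c.2.1)).map₂ (· * ·)
    (hG'.comap fun c : Γ × B × B' => (c.1, c.2.2))
  refine ⟨B × B', inferInstance, inferInstance, fun c => w c.1 * w' c.2, _, hGG', fun s σ => ?_⟩
  simp only [h, h', Finset.sum_mul_sum, sum_pair, Finset.prod_mul_distrib, mul_mul_mul_comm]
  refine Finset.sum_congr rfl fun τ _ => congrArg₂ _ (congrArg _ (hG.congr_letters ?_))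
    (congrArg _ (hG'.congr_letters ?_))
  · exact fun j hj hjs => by rw [labelAt_comp Prod.fst τ hj hjs]
  · exact fun j hj hjs => by rw [labelAt_comp Prod.snd τ hj hjs]

theorem exists_enlarge {B B' : Type} [Fintype B] [Inhabited B] [Fintype B'] [Inhabited B']
    {e : B → B'} {r : B' → B} (hr : Function.LeftInverse r e) (w : B' → K)
    {G : Nesting → (ℕ → Γ × B) → K} (hG : Recognizable G) :
    ∃ G' : Nesting → (ℕ → Γ × B') → K, Recognizable G' ∧ ∀ (s : Nesting) (σ : ℕ → Γ),
      ∑ τ : Fin s.width → B, (∏ i, w (e (τ i))) * G s (fun j => (σ j, labelAt τ j)) =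
        ∑ τ : Fin s.width → B', (∏ i, w (τ i)) * G' s fun j => (σ j, labelAt τ j) := by
  have hG' := ((Recognizable.exists_position fun c : Γ × B' => c.2 ∉ Set.range e).not.map
    (iverson K)).map₂ (· * ·) (hG.comap fun c : Γ × B' => (c.1, r c.2))
  refine ⟨_, hG', fun s σ => Fintype.sum_of_injective (e ∘ ·) (hr.injective.comp_left) _ _
    (fun τ hτ => ?_) fun τ => ?_⟩
  · obtain ⟨i, hi⟩ : ∃ i, τ i ∉ Set.range e := by
      by_contra! hrange
      choose τ' hτ' using hrange
      exact hτ ⟨τ', funext hτ'⟩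
    have hmem : (i : ℕ) + 1 ∈ Finset.Icc 1 s.width := Finset.mem_Icc.2 ⟨by omega, i.2⟩
    rw [iverson_of_false, zero_mul, mul_zero]
    exact not_not.2 ⟨i + 1, hmem, by simpa only [labelAt_succ] using hi⟩
  · rw [iverson_of_true, one_mul]
    · refine congrArg _ (hG.congr_letters fun j hj hjs => ?_)
      simp only [Function.comp_def, labelAt_comp e τ hj hjs, hr _]
    · rintro ⟨j, hj, hrange⟩
      obtain ⟨hj, hjs⟩ := Finset.mem_Icc.1 hj
      exact hrange ⟨_, (labelAt_comp e τ hj hjs).symm⟩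

theorem add {F F' : Nesting → (ℕ → Γ) → K} (hF : NivatForm F) (hF' : NivatForm F') :
    NivatForm fun s σ => F s σ + F' s σ := by
  obtain ⟨B, _, _, w, G, hG, h⟩ := hF
  obtain ⟨B', _, _, w', G', hG', h'⟩ := hF'
  obtain ⟨H, hH, e⟩ := exists_enlarge (e := Sum.inl) (r := Sum.elim id fun _ : B' => default)
    (fun _ => rfl) (Sum.elim w w') hG
  obtain ⟨H', hH', e'⟩ := exists_enlarge (e := Sum.inr) (r := Sum.elim (fun _ : B => default) id)
    (fun _ => rfl) (Sum.elim w w') hG'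
  refine ⟨B ⊕ B', inferInstance, inferInstance, Sum.elim w w', _, hH.map₂ (· + ·) hH',
    fun s σ => ?_⟩
  simp only [mul_add, Finset.sum_add_distrib, ← e, ← e', h, h', Sum.elim_inl, Sum.elim_inr]

theorem sum_sets {F : Nesting → (ℕ → Γ × Prop) → K} (hF : NivatForm F) :
    NivatForm fun s σ =>
      ∑ T ∈ (Finset.Icc 1 s.width).powerset, F s fun j => (σ j, j ∈ T) := by
  classical
  convert hF.sum_labellings using 3 with s σ
  have hmem : ∀ T : Finset ℕ, ∀ j, 0 < j → j ≤ s.width →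
      labelAt (fun i : Fin s.width => (i : ℕ) + 1 ∈ T) j = (j ∈ T) :=
    fun T j => labelAt_restrict (· ∈ T)
  refine Finset.sum_bij' (fun T _ i => (i : ℕ) + 1 ∈ T)
    (fun τ _ => (Finset.Icc 1 s.width).filter (labelAt τ)) (fun _ _ => Finset.mem_univ _)
    (fun _ _ => Finset.mem_powerset.2 (Finset.filter_subset _ _)) (fun T hT => ?_)
    (fun τ _ => funext fun i => ?_) fun T _ => hF.congr_letters fun j hj hjs => ?_
  · ext j
    rw [Finset.mem_filter]
    refine ⟨fun ⟨hj, hτ⟩ => ?_, fun hj => ?_⟩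
    · rwa [hmem T j (Finset.mem_Icc.1 hj).1 (Finset.mem_Icc.1 hj).2] at hτ
    · have hjs := Finset.mem_powerset.1 hT hj
      exact ⟨hjs, by rwa [hmem T j (Finset.mem_Icc.1 hjs).1 (Finset.mem_Icc.1 hjs).2]⟩
  · simp [labelAt_succ]
  · rw [hmem T j hj hjs]

theorem sum_marks {F : Nesting → (ℕ → Γ × Prop) → K} (hF : NivatForm F) :
    NivatForm fun s σ => ∑ x ∈ Finset.Icc 1 s.width, F s fun j => (σ j, j = x) := by
  have hsingle := ((Recognizable.exists_unique_position (Γ := Γ × Prop) Prod.snd).map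
    (iverson K)).nivatForm.mul hF
  convert hsingle.sum_sets using 3 with s σ
  refine Finset.sum_of_injOn singleton (Finset.singleton_injective.injOn) (fun x hx => ?_)
    (fun T hT hsing => ?_) fun x hx => ?_
  · simpa using hx
  · rw [iverson_of_false, zero_mul]
    rintro ⟨x, hx, hx'⟩
    refine hsing ⟨x, hx, ?_⟩
    ext j
    rw [Finset.mem_singleton]
    refine ⟨fun hj => (hx' j (hj ▸ hx)).2 hj, fun hj => ?_⟩
    exact (hx' j (Finset.mem_powerset.1 hT hj)).1 hj
  · simp only [Finset.mem_singleton]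
    rw [iverson_of_true ⟨x, hx, fun _ _ => Iff.rfl⟩, one_mul]

end NivatForm

theorem Recognizable.nivatForm_prod {K Γ : Type} [CommSemiring K]
    {F : Nesting → (ℕ → Γ × Prop) → K} (hF : Recognizable F) :
    NivatForm fun s σ => ∏ x ∈ Finset.Icc 1 s.width, F s fun j => (σ j, j = x) := by
  obtain ⟨D, out, hD⟩ := hF
  let _ : Inhabited D.P := ⟨D.start⟩
  have hwrong : Recognizable fun s (σ : ℕ → (Γ × D.P) × Prop) =>
      ∃ q, (∃ j ∈ Finset.Icc 1 s.width, ((σ j).2, (σ j).1.2) = (True, q)) ∧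
        q ≠ D.run s (fun j => ((σ j).1.1, (σ j).2)) s.width :=
    (Recognizable.values fun c : (Γ × D.P) × Prop => (c.2, c.1.2)).map₂
      (fun V p => ∃ q, (True, q) ∈ V ∧ q ≠ p)
      ((Recognizable.final_state D).comap fun c : (Γ × D.P) × Prop => (c.1.1, c.2))
  refine ⟨D.P, inferInstance, inferInstance, out, _, hwrong.exists_mark.not.map (iverson K),
    fun s σ => ?_⟩
  let guess : ℕ → D.P := fun x => D.run s (fun j => (σ j, j = x)) s.width
  have hguess (τ : Fin s.width → D.P) : (¬∃ x ∈ Finset.Icc 1 s.width, ∃ q,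
      (∃ j ∈ Finset.Icc 1 s.width, (j = x, labelAt τ j) = (True, q)) ∧ q ≠ guess x) ↔
        τ = fun i : Fin s.width => guess (i + 1) := by
    constructor
    · refine fun h => funext fun i => by_contra fun hne => h ?_
      have hi : (i : ℕ) + 1 ∈ Finset.Icc 1 s.width := Finset.mem_Icc.2 ⟨by omega, i.2⟩
      exact ⟨i + 1, hi, τ i, ⟨i + 1, hi, by simp [labelAt_succ]⟩, hne⟩
    · rintro rfl ⟨x, hx, q, ⟨j, hj, hq⟩, hne⟩
      simp only [Prod.mk.injEq, eq_iff_iff, iff_true] at hq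
      obtain ⟨rfl, rfl⟩ := hq
      obtain ⟨hj, hjs⟩ := Finset.mem_Icc.1 hj
      exact hne (labelAt_restrict guess hj hjs)
  simp only [hD, mul_comm (∏ _, _), prod_Icc_one_eq_prod_fin]
  exact (sum_iverson_of_unique (K := K) (Finset.mem_univ _) (fun τ _ => hguess τ)
    fun τ => ∏ i, out (τ i)).symm

/-! ### From formulae to automata -/

/-- The nesting relation of a nested word. -/
def NestedWord.nesting {Δ : Type} (nw : NestedWord Δ) : Nesting := ⟨nw.len, nw.rel, nw.isNest⟩

/-- The letters of encoded valuations: a letter of `Δ`, the set of those first-order variables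
whose value is the position at hand, and the set of those set variables that contain it. -/
abbrev CodeLetter (Δ : Type) : Type := Δ × (ℕ → Prop) × (ℕ → Prop)

namespace CodeLetter

variable {Δ : Type}

/-- Replaces the mark of the first-order variable `x`. -/
def setFirst (x : ℕ) (c : CodeLetter Δ × Prop) : CodeLetter Δ :=
  (c.1.1, Function.update c.1.2.1 x c.2, c.1.2.2)

/-- Replaces the mark of the set variable `X`. -/
def setSet (X : ℕ) (c : CodeLetter Δ × Prop) : CodeLetter Δ :=
  (c.1.1, c.1.2.1, Function.update c.1.2.2 X c.2)

end CodeLetter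

namespace NestedWord

variable {Δ : Type} (nw : NestedWord Δ) {g : ℕ → ℕ} {G : ℕ → Finset ℕ}

theorem one_le_len : 1 ≤ nw.len := List.length_pos_iff.2 nw.ne

theorem one_mem_Icc : 1 ∈ Finset.Icc 1 nw.len := Finset.mem_Icc.2 ⟨le_rfl, nw.one_le_len⟩

/-- The encoding of a nested word with a valuation of the variables. -/
def encode (g : ℕ → ℕ) (G : ℕ → Finset ℕ) (j : ℕ) : CodeLetter Δ :=
  (nw.letter j, fun x => j = g x, fun X => j ∈ G X)

theorem encode_update_first (x i j : ℕ) :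
    nw.encode (Function.update g x i) G j = CodeLetter.setFirst x (nw.encode g G j, j = i) := by
  refine Prod.ext rfl (Prod.ext (funext fun y => ?_) rfl)
  by_cases h : y = x <;> simp [encode, CodeLetter.setFirst, Function.update_apply, h]

theorem encode_update_set (X : ℕ) (T : Finset ℕ) (j : ℕ) :
    nw.encode g (Function.update G X T) j = CodeLetter.setSet X (nw.encode g G j, j ∈ T) := by
  refine Prod.ext rfl (Prod.ext rfl (funext fun Y => ?_))
  by_cases h : Y = X <;> simp [encode, CodeLetter.setSet, Function.update_apply, h]

end NestedWord

/-- The function `F` of encodings computes `f` on all valuations of the first-order variables by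
positions. -/
def IsCodedBy {Δ α : Type} (F : Nesting → (ℕ → CodeLetter Δ) → α)
    (f : NestedWord Δ → (ℕ → ℕ) → (ℕ → Finset ℕ) → α) : Prop :=
  ∀ nw g G, (∀ x, g x ∈ Finset.Icc 1 nw.len) → f nw g G = F nw.nesting (nw.encode g G)

namespace IsCodedBy

variable {Δ α : Type} {F : Nesting → (ℕ → CodeLetter Δ) → α}
  {f : NestedWord Δ → (ℕ → ℕ) → (ℕ → Finset ℕ) → α} {nw : NestedWord Δ} {g : ℕ → ℕ}
  {G : ℕ → Finset ℕ}

theorem update_first (h : IsCodedBy F f) (hg : ∀ x, g x ∈ Finset.Icc 1 nw.len) (x : ℕ) {i : ℕ}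
    (hi : i ∈ Finset.Icc 1 nw.len) : f nw (Function.update g x i) G =
      F nw.nesting fun j => CodeLetter.setFirst x (nw.encode g G j, j = i) := by
  rw [h nw _ G ((Function.forall_update_iff g fun _ j => j ∈ _).2 ⟨hi, fun y _ => hg y⟩)]
  exact congrArg _ (funext (nw.encode_update_first x i))

theorem update_set (h : IsCodedBy F f) (hg : ∀ x, g x ∈ Finset.Icc 1 nw.len) (X : ℕ)
    (T : Finset ℕ) : f nw g (Function.update G X T) =
      F nw.nesting fun j => CodeLetter.setSet X (nw.encode g G j, j ∈ T) := by
  rw [h nw g _ hg]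
  exact congrArg _ (funext (nw.encode_update_set X T))

end IsCodedBy

namespace MSOF

variable {Δ : Type}

theorem recognizable_of_iff {F : Nesting → (ℕ → CodeLetter Δ) → Prop} {ψ : MSOF Δ}
    (hF : Recognizable F) (h : ∀ nw g G, (∀ x, g x ∈ Finset.Icc 1 nw.len) →
      (F nw.nesting (nw.encode g G) ↔ ψ.Holds nw g G)) :
    ∃ F, Recognizable F ∧ IsCodedBy F fun nw => ψ.Holds nw :=
  ⟨F, hF, fun nw g G hg => propext (h nw g G hg).symm⟩

theorem recognizable_atom {ψ : MSOF Δ} (x : ℕ) (p : CodeLetter Δ → Prop)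
    (h : ∀ nw g G, p (nw.encode g G (g x)) ↔ ψ.Holds nw g G) :
    ∃ F, Recognizable F ∧ IsCodedBy F fun nw => ψ.Holds nw := by
  refine recognizable_of_iff (.exists_position fun c : CodeLetter Δ => c.2.1 x ∧ p c)
    fun nw g G hg => ?_
  rw [← h]
  refine ⟨fun ⟨j, _, hjx, hp⟩ => ?_, fun hp => ⟨g x, hg x, rfl, hp⟩⟩
  rwa [← show j = g x from hjx]

theorem recognizable_lev (x y : ℕ) :
    ∃ F, Recognizable F ∧ IsCodedBy F fun nw => (MSOF.lev x y : MSOF Δ).Holds nw := by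
  refine recognizable_of_iff (Recognizable.exists_lt (·.2.1 y) (·.2.1 x)).not
    fun nw g G hg => ?_
  rw [Holds, not_iff_comm, not_le]
  constructor
  · exact fun h => ⟨g x, hg x, rfl, g y, Finset.mem_Ico.2 ⟨(Finset.mem_Icc.1 (hg y)).1, h⟩, rfl⟩
  · rintro ⟨_, _, rfl, _, hlt, rfl⟩
    exact (Finset.mem_Ico.1 hlt).2

theorem recognizable_nuv (x y : ℕ) :
    ∃ F, Recognizable F ∧ IsCodedBy F fun nw => (MSOF.nuv x y : MSOF Δ).Holds nw := by
  refine recognizable_of_iff (.exists_arch (·.2.1 x) (·.2.1 y)) fun nw g G _ => ?_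
  constructor
  · rintro ⟨_, _, h, rfl, rfl⟩
    exact h
  · exact fun h => ⟨_, _, h, rfl, rfl⟩

theorem exists_recognizable (ψ : MSOF Δ) :
    ∃ F, Recognizable F ∧ IsCodedBy F fun nw => ψ.Holds nw := by
  induction ψ with
  | eqv x y =>
    exact recognizable_atom x (·.2.1 y) fun _ _ _ => Iff.rfl
  | lab a x => exact recognizable_atom x (·.1 = a) fun _ _ _ => Iff.rfl
  | mem x X => exact recognizable_atom x (·.2.2 X) fun _ _ _ => Iff.rfl
  | lev x y => exact recognizable_lev x y
  | nuv x y => exact recognizable_nuv x y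
  | not ψ ih =>
    obtain ⟨F, hF, h⟩ := ih
    exact ⟨_, hF.not, fun nw g G hg => congrArg Not (h nw g G hg)⟩
  | or ψ χ ihψ ihχ =>
    obtain ⟨⟨F, hF, h⟩, F', hF', h'⟩ := ihψ, ihχ
    exact ⟨_, hF.or hF', fun nw g G hg => congrArg₂ Or (h nw g G hg) (h' nw g G hg)⟩
  | and ψ χ ihψ ihχ =>
    obtain ⟨⟨F, hF, h⟩, F', hF', h'⟩ := ihψ, ihχ
    exact ⟨_, hF.and hF', fun nw g G hg => congrArg₂ And (h nw g G hg) (h' nw g G hg)⟩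
  | exF x ψ ih =>
    obtain ⟨F, hF, h⟩ := ih
    refine recognizable_of_iff (hF.comap (CodeLetter.setFirst x)).exists_mark fun nw g G hg => ?_
    exact exists_congr fun i => and_congr_right fun hi => (h.update_first hg x hi).symm.to_iff
  | alF x ψ ih =>
    obtain ⟨F, hF, h⟩ := ih
    refine recognizable_of_iff (hF.comap (CodeLetter.setFirst x)).not.exists_mark.not
      fun nw g G hg => ?_
    simp only [not_exists, not_and, not_not]
    exact forall₂_congr fun i hi => (h.update_first hg x hi).symm.to_iff
  | exS X ψ ih =>
    obtain ⟨F, hF, h⟩ := ih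
    refine recognizable_of_iff (hF.comap (CodeLetter.setSet X)).exists_set fun nw g G hg => ?_
    exact exists_congr fun T => and_congr_right fun _ => (h.update_set hg X T).symm.to_iff
  | alS X ψ ih =>
    obtain ⟨F, hF, h⟩ := ih
    refine recognizable_of_iff (hF.comap (CodeLetter.setSet X)).not.exists_set.not
      fun nw g G hg => ?_
    simp only [not_exists, not_and, not_not]
    exact forall₂_congr fun T _ => (h.update_set hg X T).symm.to_iff

end MSOF

theorem SyntUnamb.alS {K Δ : Type} {φ : WMSO K Δ} (hφ : SyntUnamb φ) (X : ℕ) :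
    SyntUnamb (.alS X φ) := by
  rcases hφ with ⟨ψ, hplus | hminus⟩
  · exact ⟨.alS X ψ, .inl hplus.alS⟩
  · exact ⟨.alS X ψ.not, .inl (PlusOf.not hminus).alS⟩

section Semantics

variable {K Δ : Type} [CommSemiring K]

theorem SyntUnamb.exists_sem_eq {φ : WMSO K Δ} (hφ : SyntUnamb φ) :
    ∃ ψ : MSOF Δ, ∀ nw g G, φ.sem nw g G = iverson K (ψ.Holds nw g G) := by
  rcases hφ with ⟨ψ, hplus | hminus⟩
  · exact ⟨ψ, fun _ => hplus.sem_eq⟩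
  · exact ⟨ψ.not, fun _ => hminus.sem_eq⟩

theorem AUMSO.exists_recognizable {φ : WMSO K Δ} (hφ : AUMSO φ) :
    ∃ F, Recognizable F ∧ IsCodedBy F fun nw => φ.sem nw := by
  induction hφ with
  | const k => exact ⟨_, .const k, fun _ _ _ _ => rfl⟩
  | unamb hφ =>
    obtain ⟨ψ, hψ⟩ := hφ.exists_sem_eq
    obtain ⟨F, hF, h⟩ := ψ.exists_recognizable
    exact ⟨_, hF.map (iverson K), fun nw g G hg => (hψ nw g G).trans (congrArg _ (h nw g G hg))⟩
  | and _ _ ihφ ihψ =>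
    obtain ⟨⟨F, hF, h⟩, F', hF', h'⟩ := ihφ, ihψ
    exact ⟨_, hF.map₂ _ hF', fun nw g G hg => congrArg₂ (· * ·) (h nw g G hg) (h' nw g G hg)⟩
  | or _ _ ihφ ihψ =>
    obtain ⟨⟨F, hF, h⟩, F', hF', h'⟩ := ihφ, ihψ
    exact ⟨_, hF.map₂ _ hF', fun nw g G hg => congrArg₂ (· + ·) (h nw g G hg) (h' nw g G hg)⟩

theorem AUMSO.exists_nivatForm {φ : WMSO K Δ} (hφ : AUMSO φ) :
    ∃ F, NivatForm F ∧ IsCodedBy F fun nw => φ.sem nw :=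
  let ⟨F, hF, h⟩ := hφ.exists_recognizable
  ⟨F, hF.nivatForm, h⟩

theorem SRMSO.exists_nivatForm {φ : WMSO K Δ} (hφ : SRMSO φ) :
    ∃ F, NivatForm F ∧ IsCodedBy F fun nw => φ.sem nw := by
  induction φ with
  | const k => exact (AUMSO.const k).exists_nivatForm
  | eqv x y => exact (AUMSO.unamb ⟨_, .inl (.eqv x y)⟩).exists_nivatForm
  | lab a x => exact (AUMSO.unamb ⟨_, .inl (.lab a x)⟩).exists_nivatForm
  | lev x y => exact (AUMSO.unamb ⟨_, .inl (.lev x y)⟩).exists_nivatForm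
  | nuv x y => exact (AUMSO.unamb ⟨_, .inl (.nuv x y)⟩).exists_nivatForm
  | mem x X => exact (AUMSO.unamb ⟨_, .inl (.mem x X)⟩).exists_nivatForm
  | neq x y => exact (AUMSO.unamb ⟨_, .inr (.eqv x y)⟩).exists_nivatForm
  | nlab a x => exact (AUMSO.unamb ⟨_, .inr (.lab a x)⟩).exists_nivatForm
  | nle x y => exact (AUMSO.unamb ⟨_, .inr (.lev x y)⟩).exists_nivatForm
  | nnu x y => exact (AUMSO.unamb ⟨_, .inr (.nuv x y)⟩).exists_nivatForm
  | nmem x X => exact (AUMSO.unamb ⟨_, .inr (.mem x X)⟩).exists_nivatForm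
  | or φ ψ ihφ ihψ =>
    obtain ⟨⟨F, hF, h⟩, F', hF', h'⟩ := ihφ hφ.1, ihψ hφ.2
    exact ⟨_, hF.add hF', fun nw g G hg => congrArg₂ (· + ·) (h nw g G hg) (h' nw g G hg)⟩
  | and φ ψ ihφ ihψ =>
    obtain ⟨⟨F, hF, h⟩, F', hF', h'⟩ := ihφ hφ.1, ihψ hφ.2
    exact ⟨_, hF.mul hF', fun nw g G hg => congrArg₂ (· * ·) (h nw g G hg) (h' nw g G hg)⟩
  | exF x φ ih =>
    obtain ⟨F, hF, h⟩ := ih hφ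
    exact ⟨_, (hF.comap (CodeLetter.setFirst x)).sum_marks, fun nw g G hg =>
      Finset.sum_congr rfl fun i hi => h.update_first hg x hi⟩
  | exS X φ ih =>
    obtain ⟨F, hF, h⟩ := ih hφ
    exact ⟨_, (hF.comap (CodeLetter.setSet X)).sum_sets, fun nw g G hg =>
      Finset.sum_congr rfl fun T _ => h.update_set hg X T⟩
  | alF x φ =>
    obtain ⟨F, hF, h⟩ := hφ.1.exists_recognizable
    exact ⟨_, (hF.comap (CodeLetter.setFirst x)).nivatForm_prod, fun nw g G hg =>
      Finset.prod_congr rfl fun i hi => h.update_first hg x hi⟩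
  | alS X φ => exact (AUMSO.unamb (hφ.1.alS X)).exists_nivatForm

end Semantics

section Regular

theorem clampFun_of_le {Q : Type} {n k : ℕ} (r : Fin (n + 1) → Q) (h : k ≤ n) :
    clampFun r k = r ⟨k, Nat.lt_succ_of_le h⟩ := by
  simp only [clampFun, min_eq_left h]

variable {K Δ : Type} [CommSemiring K]

namespace WNWA

variable (A : WNWA K Δ)

/-- The three transition functions of an automaton, combined. -/
def trans (q : A.Q) (m : Move A.Q) (a : Δ) (q' : A.Q) : K :=
  match m with
  | .call => A.δcall q a q'
  | .int => A.δint q a q'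
  | .ret p => A.δret q p a q'

theorem posWeight_eq_trans (nw : NestedWord Δ) (ρ : ℕ → A.Q) (j : ℕ) :
    A.posWeight nw ρ j = A.trans (ρ (j - 1)) (nw.nesting.move ρ j) (nw.letter j) (ρ j) := by
  by_cases hcall : nw.IsCall j
  · rw [Nesting.move_of_call hcall.choose_spec, posWeight, if_pos hcall, trans]
  · by_cases hret : nw.IsReturn j
    · rw [Nesting.move_of_return hret.choose_spec, posWeight, if_neg hcall, dif_pos hret, trans]
    · rw [nw.nesting.move_of_internal hcall hret, posWeight, if_neg hcall, dif_neg hret, trans]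

end WNWA

namespace DetNWA

variable {B : Type} (D : DetNWA (Δ × B))

theorem isRun_iff [Inhabited B] (nw : NestedWord Δ) (τ : Fin nw.len → B)
    (r : Fin (nw.len + 1) → D.P) :
    (r 0 = D.start ∧ ∀ i : Fin nw.len, clampFun r (i + 1) =
      D.next (clampFun r i) (nw.nesting.move (clampFun r) (i + 1)) (nw.letter (i + 1), τ i)) ↔
      r = fun k : Fin _ => D.run nw.nesting (fun j => (nw.letter j, labelAt τ j)) k := by
  constructor
  · rintro ⟨h₀, hstep⟩
    refine funext fun k => ?_
    rw [← D.eq_run_of_step (ρ := clampFun r) ((clampFun_of_le r (Nat.zero_le _)).trans h₀)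
      (fun j hj hjn => ?_) (Nat.le_of_lt_succ k.2), clampFun_of_le r (Nat.le_of_lt_succ k.2)]
    obtain ⟨i, rfl⟩ := exists_fin_succ_eq hj hjn
    rw [hstep, step, labelAt_succ, Nat.add_sub_cancel]
  · rintro rfl
    refine ⟨D.run_zero, fun i => ?_⟩
    rw [clampFun_of_le _ i.2, clampFun_of_le _ i.2.le]
    refine D.run_succ.trans ?_
    rw [labelAt_succ]
    refine congrArg₂ _ (Nesting.move_congr fun l hl => ?_) rfl
    have := nw.nesting.lt hl
    rw [clampFun_of_le _ (by omega)]

variable [Fintype B]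

/-- The weighted automaton obtained from `D` by forgetting the `B`-components of the letters: a
transition weighs the sum of the weights of those `b` with which `D` makes it. -/
noncomputable abbrev weighted (w : B → K) (out : D.P → K) : WNWA K Δ where
  Q := D.P
  ι q := iverson K (q = D.start)
  δcall q a q' := ∑ b, iverson K (q' = D.next q .call (a, b)) * w b
  δint q a q' := ∑ b, iverson K (q' = D.next q .int (a, b)) * w b
  δret q p a q' := ∑ b, iverson K (q' = D.next q (.ret p) (a, b)) * w b
  κ := out

theorem trans_weighted (w : B → K) (out : D.P → K) (q : D.P) (m : Move D.P) (a : Δ) (q' : D.P) :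
    (D.weighted w out).trans q m a q' = ∑ b, iverson K (q' = D.next q m (a, b)) * w b := by
  cases m <;> rfl

theorem posWeight_weighted (w : B → K) (out : D.P → K) (nw : NestedWord Δ) (ρ : ℕ → D.P) (j : ℕ) :
    (D.weighted w out).posWeight nw ρ j = ∑ b, iverson K (ρ j =
      D.next (ρ (j - 1)) (nw.nesting.move ρ j) (nw.letter j, b)) * w b :=
  ((D.weighted w out).posWeight_eq_trans nw ρ j).trans (D.trans_weighted w out _ _ _ _)

theorem runWeight_weighted (w : B → K) (out : D.P → K) (nw : NestedWord Δ) (ρ : ℕ → D.P) :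
    (D.weighted w out).runWeight nw ρ =
      ∑ τ : Fin nw.len → B, iverson K (∀ i : Fin nw.len, ρ (i + 1) =
        D.next (ρ i) (nw.nesting.move ρ (i + 1)) (nw.letter (i + 1), τ i)) * ∏ i, w (τ i) := by
  have hprod := Finset.prod_univ_sum (fun _ : Fin nw.len => (Finset.univ : Finset B)) fun i b =>
    iverson K (ρ (i + 1) =
      D.next (ρ i) (nw.nesting.move ρ (i + 1)) (nw.letter (i + 1), b)) * w b
  simp only [Fintype.piFinset_univ, Finset.prod_mul_distrib, prod_iverson, Finset.mem_univ,
    true_imp_iff] at hprod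
  rw [← hprod]
  exact (prod_Icc_one_eq_prod_fin _ _).trans
    (Finset.prod_congr rfl fun i _ => D.posWeight_weighted w out nw ρ (i + 1))

theorem behavior_weighted [Inhabited B] (w : B → K) (out : D.P → K) (nw : NestedWord Δ) :
    (D.weighted w out).behavior nw = ∑ τ : Fin nw.len → B, (∏ i, w (τ i)) *
      out (D.run nw.nesting (fun j => (nw.letter j, labelAt τ j)) nw.len) := by
  calc (D.weighted w out).behavior nw
      = ∑ r : Fin (nw.len + 1) → D.P, iverson K (r 0 = D.start) *
          (D.weighted w out).runWeight nw (clampFun r) * out (r (Fin.last _)) := rfl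
    _ = ∑ r : Fin (nw.len + 1) → D.P, ∑ τ : Fin nw.len → B,
          iverson K (r = fun k : Fin _ =>
            D.run nw.nesting (fun j => (nw.letter j, labelAt τ j)) k) *
            ((∏ i, w (τ i)) * out (r (Fin.last _))) := by
        refine Finset.sum_congr rfl fun r _ => ?_
        rw [runWeight_weighted, Finset.mul_sum, Finset.sum_mul]
        refine Finset.sum_congr rfl fun τ _ => ?_
        rw [← iverson_congr (D.isRun_iff nw τ r), ← iverson_mul_iverson, mul_assoc, mul_assoc,
          mul_assoc]
    _ = _ := by
        rw [Finset.sum_comm]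
        exact Finset.sum_congr rfl fun τ _ =>
          sum_iverson_of_unique (Finset.mem_univ _) (fun _ _ => Iff.rfl) _

end DetNWA

theorem NivatForm.regular {F : Nesting → (ℕ → Δ) → K} (hF : NivatForm F) :
    NWRegular fun nw : NestedWord Δ => F nw.nesting nw.letter := by
  obtain ⟨B, _, _, w, G, ⟨D, out, hD⟩, h⟩ := hF
  refine ⟨D.weighted w out, fun nw => ?_⟩
  simp only [h, hD, D.behavior_weighted]
  rfl

-- The position `1` is guessed, as the one that no position precedes.
theorem NivatForm.at_one {F : Nesting → (ℕ → CodeLetter Δ) → K} (hF : NivatForm F) :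
    ∃ F' : Nesting → (ℕ → Δ) → K, NivatForm F' ∧ ∀ nw : NestedWord Δ,
      F' nw.nesting nw.letter = F nw.nesting (nw.encode (fun _ => 1) fun _ => ∅) := by
  have hfirst := ((Recognizable.exists_lt (Γ := Δ × Prop) (fun _ => True) Prod.snd).not.map
    (iverson K)).nivatForm.mul (hF.comap fun c : Δ × Prop => (c.1, fun _ => c.2, fun _ => False))
  refine ⟨_, hfirst.sum_marks, fun nw => ?_⟩
  refine (sum_iverson_of_unique nw.one_mem_Icc (fun x hx => ?_) _).trans ?_
  · obtain ⟨hx, hxn⟩ := Finset.mem_Icc.1 hx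
    refine ⟨fun h => by_contra fun hne => ?_, ?_⟩
    · exact h ⟨x, Finset.mem_Icc.2 ⟨hx, hxn⟩, rfl, 1, Finset.mem_Ico.2 ⟨le_rfl, by omega⟩, trivial⟩
    · rintro rfl ⟨_, _, rfl, i, hi, _⟩
      simp at hi
  · exact congrArg _ (funext fun j => by simp [NestedWord.encode])

theorem NWRegular.of_definable_sRMSO {S : NestedWord Δ → K} (hS : NWDefinable SRMSO S) :
    NWRegular S := by
  obtain ⟨φ, hφ, _, hsem⟩ := hS
  obtain ⟨F, hF, hcode⟩ := hφ.exists_nivatForm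
  obtain ⟨F', hF', h⟩ := hF.at_one
  convert hF'.regular with nw
  rw [h, ← hcode nw _ _ fun _ => nw.one_mem_Icc]
  exact (hsem nw _ _).symm

end Regular

/-! ### Definability by syntactically restricted first-order formulae -/

namespace MSOF

variable {Δ : Type}

/-- The size of a formula. Quantifiers weigh more than connectives because the unambiguous form of
`∃x.φ` refers to that of `¬(x ≤ y) ∧ φ[y/x]`. -/
def size : MSOF Δ → ℕ
  | exF _ φ | exS _ φ | alF _ φ | alS _ φ => φ.size + 4
  | not φ => φ.size + 1
  | or φ ψ | and φ ψ => φ.size + ψ.size + 1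
  | _ => 0

theorem size_substF (x y : ℕ) (ψ : MSOF Δ) : (ψ.substF x y).size = ψ.size := by
  induction ψ <;> grind [substF, size]

/-- There are no set quantifiers, and all set variables are below `m`. -/
def IsFirstOrder (m : ℕ) : MSOF Δ → Prop
  | mem _ X => X < m
  | not φ | exF _ φ | alF _ φ => φ.IsFirstOrder m
  | or φ ψ | and φ ψ => φ.IsFirstOrder m ∧ ψ.IsFirstOrder m
  | exS _ _ | alS _ _ => False
  | _ => True

theorem IsFirstOrder.substF {m : ℕ} {ψ : MSOF Δ} (hψ : ψ.IsFirstOrder m) (x y : ℕ) :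
    (ψ.substF x y).IsFirstOrder m := by
  induction ψ <;> grind [MSOF.substF, IsFirstOrder]

end MSOF

section FirstOrder

variable {K Δ : Type} {m : ℕ}

/-- The sRFO formulae with free set variables below `m`. -/
structure WMSO.IsFirstOrder (m : ℕ) (φ : WMSO K Δ) : Prop where
  srfo : SRFO φ
  freeS_subset : φ.freeS ⊆ Finset.range m

namespace WMSO.IsFirstOrder

variable {φ ψ : WMSO K Δ}

theorem or (hφ : φ.IsFirstOrder m) (hψ : ψ.IsFirstOrder m) : (WMSO.or φ ψ).IsFirstOrder m :=
  ⟨⟨⟨hφ.1.1, hψ.1.1⟩, hφ.1.2, hψ.1.2⟩, Finset.union_subset hφ.2 hψ.2⟩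

theorem and (hφ : φ.IsFirstOrder m) (hψ : ψ.IsFirstOrder m) : (WMSO.and φ ψ).IsFirstOrder m :=
  ⟨⟨⟨hφ.1.1, hψ.1.1⟩, hφ.1.2, hψ.1.2⟩, Finset.union_subset hφ.2 hψ.2⟩

theorem exF (hφ : φ.IsFirstOrder m) (x : ℕ) : (WMSO.exF x φ).IsFirstOrder m := ⟨hφ.1, hφ.2⟩

theorem alF (hφ : φ.IsFirstOrder m) (h : AUMSO φ) (x : ℕ) : (WMSO.alF x φ).IsFirstOrder m :=
  ⟨⟨⟨h, hφ.1.1⟩, hφ.1.2⟩, hφ.2⟩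

end WMSO.IsFirstOrder

variable (K) in
theorem MSOF.IsFirstOrder.exists_plus_minus : (ψ : MSOF Δ) → ψ.IsFirstOrder m →
    (∃ φ : WMSO K Δ, PlusOf K ψ φ ∧ φ.IsFirstOrder m) ∧
      ∃ φ : WMSO K Δ, MinusOf K ψ φ ∧ φ.IsFirstOrder m
  | .eqv x y, _ => ⟨⟨_, .eqv x y, ⟨trivial, trivial⟩, Finset.empty_subset _⟩,
      _, .eqv x y, ⟨trivial, trivial⟩, Finset.empty_subset _⟩
  | .lab a x, _ => ⟨⟨_, .lab a x, ⟨trivial, trivial⟩, Finset.empty_subset _⟩,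
      _, .lab a x, ⟨trivial, trivial⟩, Finset.empty_subset _⟩
  | .lev x y, _ => ⟨⟨_, .lev x y, ⟨trivial, trivial⟩, Finset.empty_subset _⟩,
      _, .lev x y, ⟨trivial, trivial⟩, Finset.empty_subset _⟩
  | .nuv x y, _ => ⟨⟨_, .nuv x y, ⟨trivial, trivial⟩, Finset.empty_subset _⟩,
      _, .nuv x y, ⟨trivial, trivial⟩, Finset.empty_subset _⟩
  | .mem x X, h =>
    have hX : {X} ⊆ Finset.range m := Finset.singleton_subset_iff.2 (Finset.mem_range.2 h)
    ⟨⟨_, .mem x X, ⟨trivial, trivial⟩, hX⟩, _, .mem x X, ⟨trivial, trivial⟩, hX⟩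
  | .not ψ, h =>
    let ⟨⟨_, hplus, hp⟩, _, hminus, hm⟩ := exists_plus_minus ψ h
    ⟨⟨_, .not hminus, hm⟩, _, .not hplus, hp⟩
  | .or ψ χ, h =>
    let ⟨⟨_, hplus, hp⟩, _, hminus, hm⟩ := exists_plus_minus ψ h.1
    let ⟨⟨_, hplus', hp'⟩, _, hminus', hm'⟩ := exists_plus_minus χ h.2
    ⟨⟨_, .or hplus hminus hplus', hp.or (hm.and hp')⟩, _, .or hminus hminus', hm.and hm'⟩
  | .and ψ χ, h =>
    let ⟨⟨_, hplus, hp⟩, _, hminus, hm⟩ := exists_plus_minus ψ h.1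
    let ⟨⟨_, hplus', hp'⟩, _, hminus', hm'⟩ := exists_plus_minus χ h.2
    ⟨⟨_, .and hplus hplus', hp.and hp'⟩, _, .and hminus hplus hminus', hm.or (hp.and hm')⟩
  | .exF x ψ, h =>
    have hψ : ψ.IsFirstOrder m := h
    let ⟨⟨_, hplus, hp⟩, _, hminus, hm⟩ := exists_plus_minus ψ h
    let y := (MSOF.exF x ψ).maxF + 1
    let ⟨_, _, hlater, hl⟩ := exists_plus_minus (.and (.not (.lev x y)) (ψ.substF x y))
      ⟨trivial, hψ.substF x y⟩
    ⟨⟨_, .exF y rfl hplus hlater, (hp.and (hl.alF (.unamb ⟨_, .inr hlater⟩) y)).exF x⟩,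
      _, .exF hminus, hm.alF (.unamb ⟨_, .inr hminus⟩) x⟩
  | .alF x ψ, h =>
    have hψ : ψ.IsFirstOrder m := h
    let ⟨⟨_, hplus, hp⟩, _, hminus, hm⟩ := exists_plus_minus ψ h
    let y := (MSOF.alF x ψ).maxF + 1
    let ⟨_, _, hlater, hl⟩ := exists_plus_minus (.and (.not (.lev x y)) (.not (ψ.substF x y)))
      ⟨trivial, hψ.substF x y⟩
    ⟨⟨_, .alF hplus, hp.alF (.unamb ⟨_, .inl hplus⟩) x⟩,
      _, .alF y rfl hminus hlater, (hm.and (hl.alF (.unamb ⟨_, .inr hlater⟩) y)).exF x⟩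
  | .exS X ψ, h => h.elim
  | .alS X ψ, h => h.elim
termination_by ψ => ψ.size
decreasing_by all_goals simp only [size, size_substF]; omega

/-- `P` is definable by a classical first-order formula with set variables below `m`. -/
def FODefinable (m : ℕ) (P : NestedWord Δ → (ℕ → ℕ) → (ℕ → Finset ℕ) → Prop) : Prop :=
  ∃ ψ : MSOF Δ, ψ.IsFirstOrder m ∧ ∀ nw g G, ψ.Holds nw g G ↔ P nw g G

namespace FODefinable

variable {P P' : NestedWord Δ → (ℕ → ℕ) → (ℕ → Finset ℕ) → Prop}

theorem lab (a : Δ) (x : ℕ) : FODefinable m fun nw g _ => nw.letter (g x) = a :=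
  ⟨.lab a x, trivial, fun _ _ _ => Iff.rfl⟩

theorem le (x y : ℕ) : FODefinable (Δ := Δ) m fun _ g _ => g x ≤ g y :=
  ⟨.lev x y, trivial, fun _ _ _ => Iff.rfl⟩

theorem rel (x y : ℕ) : FODefinable (Δ := Δ) m fun nw g _ => nw.rel (g x) (g y) :=
  ⟨.nuv x y, trivial, fun _ _ _ => Iff.rfl⟩

theorem mem (x : ℕ) {X : ℕ} (hX : X < m) : FODefinable (Δ := Δ) m fun _ g G => g x ∈ G X :=
  ⟨.mem x X, hX, fun _ _ _ => Iff.rfl⟩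

theorem not (hP : FODefinable m P) : FODefinable m fun nw g G => ¬P nw g G :=
  let ⟨ψ, hψ, h⟩ := hP
  ⟨.not ψ, hψ, fun nw g G => not_congr (h nw g G)⟩

theorem and (hP : FODefinable m P) (hP' : FODefinable m P') :
    FODefinable m fun nw g G => P nw g G ∧ P' nw g G :=
  let ⟨ψ, hψ, h⟩ := hP
  let ⟨ψ', hψ', h'⟩ := hP'
  ⟨.and ψ ψ', ⟨hψ, hψ'⟩, fun nw g G => and_congr (h nw g G) (h' nw g G)⟩

theorem or (hP : FODefinable m P) (hP' : FODefinable m P') :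
    FODefinable m fun nw g G => P nw g G ∨ P' nw g G :=
  let ⟨ψ, hψ, h⟩ := hP
  let ⟨ψ', hψ', h'⟩ := hP'
  ⟨.or ψ ψ', ⟨hψ, hψ'⟩, fun nw g G => or_congr (h nw g G) (h' nw g G)⟩

theorem exists_position (hP : FODefinable m P) (x : ℕ) :
    FODefinable m fun nw g G => ∃ i ∈ Finset.Icc 1 nw.len, P nw (Function.update g x i) G :=
  let ⟨ψ, hψ, h⟩ := hP
  ⟨.exF x ψ, hψ, fun nw _ G => exists_congr fun _ => and_congr_right fun _ => h nw _ G⟩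

theorem forall_position (hP : FODefinable m P) (x : ℕ) :
    FODefinable m fun nw g G => ∀ i ∈ Finset.Icc 1 nw.len, P nw (Function.update g x i) G :=
  let ⟨ψ, hψ, h⟩ := hP
  ⟨.alF x ψ, hψ, fun nw _ G => forall₂_congr fun _ _ => h nw _ G⟩

theorem const (p : Prop) : FODefinable (Δ := Δ) m fun _ _ _ => p := by
  by_cases hp : p
  · exact ⟨.eqv 0 0, trivial, fun _ _ _ => iff_of_true rfl hp⟩
  · exact ⟨.not (.eqv 0 0), trivial, fun _ _ _ => iff_of_false (not_not_intro rfl) hp⟩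

theorem forall_finite {ι : Type} [Finite ι]
    {P : ι → NestedWord Δ → (ℕ → ℕ) → (ℕ → Finset ℕ) → Prop}
    (hP : ∀ i, FODefinable m (P i)) : FODefinable m fun nw g G => ∀ i, P i nw g G := by
  classical
  have forall_mem (s : Finset ι) : FODefinable m fun nw g G => ∀ i ∈ s, P i nw g G := by
    induction s using Finset.induction_on with
    | empty => simpa only [Finset.notMem_empty, false_imp_iff, implies_true] using const True
    | insert i s _ ih => simpa only [Finset.forall_mem_insert] using (hP i).and ih
  cases nonempty_fintype ι
  simpa only [Finset.mem_univ, true_imp_iff] using forall_mem Finset.univ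

end FODefinable

variable [CommSemiring K]

/-- `f` is the semantics of a formula in `Z`. Unlike in `NWDefinable`, free variables are
allowed. -/
def DefinableBy (Z : WMSO K Δ → Prop) (f : NestedWord Δ → (ℕ → ℕ) → (ℕ → Finset ℕ) → K) : Prop :=
  ∃ φ, Z φ ∧ ∀ nw g G, φ.sem nw g G = f nw g G

/-- Fragments that contain the constants and are closed under disjunction and conjunction, so that
the series they define form a subalgebra. -/
class IsAlgebraFragment (Z : WMSO K Δ → Prop) : Prop where
  const (k : K) : Z (.const k)
  or {φ ψ : WMSO K Δ} : Z φ → Z ψ → Z (.or φ ψ)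
  and {φ ψ : WMSO K Δ} : Z φ → Z ψ → Z (.and φ ψ)

namespace DefinableBy

variable {Z : WMSO K Δ → Prop} {f f' : NestedWord Δ → (ℕ → ℕ) → (ℕ → Finset ℕ) → K}

theorem mono {Z' : WMSO K Δ → Prop} (hf : DefinableBy Z f) (hZ : ∀ φ, Z φ → Z' φ) :
    DefinableBy Z' f :=
  let ⟨φ, hφ, h⟩ := hf
  ⟨φ, hZ φ hφ, h⟩

variable [IsAlgebraFragment Z]

variable (Z) in
theorem const (k : K) : DefinableBy Z fun _ _ _ => k :=
  ⟨.const k, IsAlgebraFragment.const k, fun _ _ _ => rfl⟩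

theorem add (hf : DefinableBy Z f) (hf' : DefinableBy Z f') :
    DefinableBy Z fun nw g G => f nw g G + f' nw g G :=
  let ⟨φ, hφ, h⟩ := hf
  let ⟨φ', hφ', h'⟩ := hf'
  ⟨.or φ φ', IsAlgebraFragment.or hφ hφ', fun nw g G => congrArg₂ (· + ·) (h nw g G) (h' nw g G)⟩

theorem mul (hf : DefinableBy Z f) (hf' : DefinableBy Z f') :
    DefinableBy Z fun nw g G => f nw g G * f' nw g G :=
  let ⟨φ, hφ, h⟩ := hf
  let ⟨φ', hφ', h'⟩ := hf'
  ⟨.and φ φ', IsAlgebraFragment.and hφ hφ', fun nw g G => congrArg₂ (· * ·) (h nw g G) (h' nw g G)⟩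

theorem sum {ι : Type} (s : Finset ι) {f : ι → NestedWord Δ → (ℕ → ℕ) → (ℕ → Finset ℕ) → K}
    (hf : ∀ i, DefinableBy Z (f i)) : DefinableBy Z fun nw g G => ∑ i ∈ s, f i nw g G := by
  classical
  induction s using Finset.induction_on with
  | empty => simpa only [Finset.sum_empty] using const Z 0
  | insert i s hi ih => simpa only [Finset.sum_insert hi] using (hf i).add ih

end DefinableBy

instance : IsAlgebraFragment (WMSO.IsFirstOrder (K := K) (Δ := Δ) m) where
  const _ := ⟨⟨trivial, trivial⟩, Finset.empty_subset _⟩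
  or := .or
  and := .and

/-- The formulae allowed under a first-order universal quantifier in sRFO. -/
structure WMSO.IsStep (m : ℕ) (φ : WMSO K Δ) : Prop where
  aumso : AUMSO φ
  isFirstOrder : φ.IsFirstOrder m

instance : IsAlgebraFragment (WMSO.IsStep (K := K) (Δ := Δ) m) where
  const k := ⟨.const k, IsAlgebraFragment.const k⟩
  or hφ hψ := ⟨.or hφ.1 hψ.1, hφ.2.or hψ.2⟩
  and hφ hψ := ⟨.and hφ.1 hψ.1, hφ.2.and hψ.2⟩

variable {P : NestedWord Δ → (ℕ → ℕ) → (ℕ → Finset ℕ) → Prop}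
  {f : NestedWord Δ → (ℕ → ℕ) → (ℕ → Finset ℕ) → K}

theorem FODefinable.iverson (hP : FODefinable m P) :
    DefinableBy (WMSO.IsStep m) fun nw g G => iverson K (P nw g G) :=
  let ⟨ψ, hψ, h⟩ := hP
  let ⟨φ, hplus, hφ⟩ := (hψ.exists_plus_minus K).1
  ⟨φ, ⟨.unamb ⟨ψ, .inl hplus⟩, hφ⟩, fun nw g G =>
    (hplus.sem_eq g G).trans (iverson_congr (h nw g G))⟩

theorem DefinableBy.prod_positions (hf : DefinableBy (WMSO.IsStep m) f) (x : ℕ) :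
    DefinableBy (WMSO.IsFirstOrder m) fun nw g G =>
      ∏ i ∈ Finset.Icc 1 nw.len, f nw (Function.update g x i) G :=
  let ⟨φ, hφ, h⟩ := hf
  ⟨.alF x φ, hφ.2.alF hφ.1 x, fun nw _ G => Finset.prod_congr rfl fun _ _ => h nw _ G⟩

/-! ### Sentences -/

-- `∃x. (∀y. x ≤ y) ∧ φ` binds `x` to the position `1`.
theorem WMSO.IsFirstOrder.exists_bind {φ : WMSO K Δ} (hφ : φ.IsFirstOrder m) (x : ℕ) :
    ∃ φ' : WMSO K Δ, φ'.IsFirstOrder m ∧ φ'.freeF = φ.freeF.erase x ∧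
      ∀ nw g G, φ'.sem nw g G = φ.sem nw (Function.update g x 1) G := by
  have hfirst : (WMSO.lev x (x + 1) : WMSO K Δ).IsFirstOrder m :=
    ⟨⟨trivial, trivial⟩, Finset.empty_subset _⟩
  refine ⟨.exF x (.and (.alF (x + 1) (.lev x (x + 1))) φ),
    ((hfirst.alF (.unamb ⟨_, .inl (.lev _ _)⟩) _).and hφ).exF x, ?_, fun nw g G => ?_⟩
  · ext y
    simp only [WMSO.freeF]
    grind
  · simp only [WMSO.sem, ite_one_zero_eq_iverson, prod_iverson, Function.update_self,
      Function.update_of_ne (Nat.succ_ne_self x).symm]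
    refine sum_iverson_of_unique nw.one_mem_Icc (fun i hi => ⟨fun h => ?_, ?_⟩) _
    · exact le_antisymm (h 1 nw.one_mem_Icc) (Finset.mem_Icc.1 hi).1
    · rintro rfl j hj
      exact (Finset.mem_Icc.1 hj).1

theorem WMSO.IsFirstOrder.exists_freeF_eq_empty {φ : WMSO K Δ} (hφ : φ.IsFirstOrder m)
    (hg : ∀ nw g g' G, φ.sem nw g G = φ.sem nw g' G) :
    ∃ φ' : WMSO K Δ, φ'.IsFirstOrder m ∧ φ'.freeF = ∅ ∧
      ∀ nw g G, φ'.sem nw g G = φ.sem nw g G := by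
  induction hs : φ.freeF using Finset.induction_on generalizing φ with
  | empty => exact ⟨φ, hφ, hs, fun _ _ _ => rfl⟩
  | insert x s hx ih =>
    obtain ⟨φ₁, hφ₁, hfree, hsem⟩ := hφ.exists_bind x
    have hsem₁ nw g G : φ₁.sem nw g G = φ.sem nw g G := (hsem nw g G).trans (hg nw _ _ G)
    obtain ⟨φ', hφ', hfree', hsem'⟩ := ih hφ₁ (fun nw g g' G => by simp only [hsem₁, hg nw g g'])
      (by rw [hfree, hs, Finset.erase_insert hx])
    exact ⟨φ', hφ', hfree', fun nw g G => (hsem' nw g G).trans (hsem₁ nw g G)⟩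

/-- The assignment of the sets `T` to the set variables below `m`, and of `G` to the others. -/
def assignSets {α : Type} (T : Fin m → α) (G : ℕ → α) (X : ℕ) : α :=
  if h : X < m then T ⟨X, h⟩ else G X

theorem assignSets_snoc {α : Type} (T : Fin m → α) (S : α) (G : ℕ → α) :
    assignSets (Fin.snoc T S : Fin (m + 1) → α) G = Function.update (assignSets T G) m S := by
  funext X
  simp only [assignSets, Fin.snoc, Fin.castLT, Function.update_apply, cast_eq]
  grind

theorem SREMSO.exists_sentence {φ : WMSO K Δ} (hφ : SREMSO φ) (hF : φ.freeF = ∅)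
    (hS : φ.freeS ⊆ Finset.range m) :
    ∃ φ' : WMSO K Δ, SREMSO φ' ∧ φ'.Sentence ∧ ∀ nw g G, φ'.sem nw g G =
      ∑ T : Fin m → (Finset.Icc 1 nw.len).powerset, φ.sem nw g (assignSets (fun i => T i) G) := by
  induction m generalizing φ with
  | zero =>
    refine ⟨φ, hφ, ⟨hF, Finset.subset_empty.1 hS⟩, fun nw g G => ?_⟩
    have (T : Fin 0 → Finset ℕ) : assignSets T G = G := rfl
    simp [this]
  | succ m ih =>
    have hS' : (WMSO.exS m φ).freeS ⊆ Finset.range m := fun X hX => by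
      have := hS (Finset.mem_of_mem_erase hX)
      have := Finset.ne_of_mem_erase hX
      simp only [Finset.mem_range] at *
      omega
    obtain ⟨φ', hφ', hsent, hsem⟩ := ih hφ.exS hF hS'
    refine ⟨φ', hφ', hsent, fun nw g G => (hsem nw g G).trans ?_⟩
    simp only [WMSO.sem, ← Finset.sum_coe_sort (Finset.Icc 1 nw.len).powerset]
    rw [← (Fin.snocEquiv fun _ => _).sum_comp, Fintype.sum_prod_type_right]
    refine Finset.sum_congr rfl fun T _ => Finset.sum_congr rfl fun S _ => congrArg _ ?_
    rw [← assignSets_snoc]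
    refine congrArg (assignSets · G) (funext fun i => ?_)
    cases i using Fin.lastCases <;> simp [Fin.snocEquiv]

end FirstOrder

/-! ### From automata to formulae -/

section Runs

/-- `Move P` is `P` with two extra elements. -/
def Move.equivOption (P : Type) : Move P ≃ Option (Option P) where
  toFun
    | call => none
    | int => some none
    | ret p => some (some p)
  invFun
    | none => call
    | some none => int
    | some (some p) => ret p
  left_inv m := by cases m <;> rfl
  right_inv o := by rcases o with _ | _ | p <;> rfl

instance {P : Type} [Fintype P] : Fintype (Move P) :=
  Fintype.ofEquiv _ (Move.equivOption P).symm

variable {K Δ Q : Type} {m : ℕ} {nw : NestedWord Δ}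

/-- In the labelling of positions by states which the sets `X` encode, `j` is labelled `q`. A run
is encoded by labelling each position with the state before it is read. -/
def StateAt (e : Fin m ≃ Q) (X : Fin m → Finset ℕ) (q : Q) (j : ℕ) : Prop :=
  ∀ i, j ∈ X i ↔ e i = q

theorem StateAt.unique {e : Fin m ≃ Q} {X : Fin m → Finset ℕ} {q q' : Q} {j : ℕ}
    (h : StateAt e X q j) (h' : StateAt e X q' j) : q = q' := by
  rw [← e.apply_symm_apply q, ← h', h, e.apply_symm_apply]

/-- `μ` is the move offered at position `j`, the states being those encoded by the sets `X`. -/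
def MoveAt (e : Fin m ≃ Q) (X : Fin m → Finset ℕ) (nw : NestedWord Δ) (j : ℕ) : Move Q → Prop
  | .call => nw.IsCall j
  | .int => ¬nw.IsCall j ∧ ¬nw.IsReturn j
  | .ret p => ∃ i, nw.rel i j ∧ StateAt e X p i

/-- After position `j` the state is `q`; the state `q'` after the last position is not encoded by
the sets `X`. -/
def StateAfter (e : Fin m ≃ Q) (X : Fin m → Finset ℕ) (q' : Q) (nw : NestedWord Δ) (j : ℕ)
    (q : Q) : Prop :=
  nw.len ≤ j ∧ q = q' ∨ j + 1 ≤ nw.len ∧ StateAt e X q (j + 1)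

section Encodes

variable {e : Fin m ≃ Q} {X : Fin m → Finset ℕ} {ρ : ℕ → Q} {j : ℕ}

/-- The sets `X` encode the run `ρ`, except for its last state. -/
def EncodesRun (e : Fin m ≃ Q) (X : Fin m → Finset ℕ) (nw : NestedWord Δ) (ρ : ℕ → Q) : Prop :=
  ∀ j ∈ Finset.Icc 1 nw.len, StateAt e X (ρ (j - 1)) j

theorem EncodesRun.stateAt_iff (h : EncodesRun e X nw ρ) (hj : j ∈ Finset.Icc 1 nw.len) {q : Q} :
    StateAt e X q j ↔ q = ρ (j - 1) :=
  ⟨fun hq => hq.unique (h j hj), fun hq => hq ▸ h j hj⟩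

theorem EncodesRun.stateAfter_iff (h : EncodesRun e X nw ρ) (hj : j ∈ Finset.Icc 1 nw.len)
    {q : Q} : StateAfter e X (ρ nw.len) nw j q ↔ q = ρ j := by
  rcases (Finset.mem_Icc.1 hj).2.eq_or_lt with rfl | hlt
  · simp [StateAfter]
  · rw [StateAfter, h.stateAt_iff (Finset.mem_Icc.2 ⟨by omega, hlt⟩), Nat.succ_sub_one,
      or_iff_right fun h => hlt.not_ge h.1, and_iff_right (Nat.succ_le_of_lt hlt)]

theorem EncodesRun.moveAt_iff (h : EncodesRun e X nw ρ) {μ : Move Q} :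
    MoveAt e X nw j μ ↔ μ = nw.nesting.move ρ j := by
  have hret {i : ℕ} {p : Q} (hij : nw.rel i j) : StateAt e X p i ↔ p = ρ (i - 1) :=
    h.stateAt_iff (Finset.mem_Icc.2 ⟨nw.nesting.one_le hij,
      (nw.nesting.lt hij).le.trans (nw.nesting.le_width hij)⟩)
  by_cases hj : nw.IsCall j
  · obtain ⟨l, hl⟩ := hj
    rw [nw.nesting.move_of_call hl]
    cases μ with
    | call => exact iff_of_true ⟨l, hl⟩ rfl
    | int => exact iff_of_false (fun h => h.1 ⟨l, hl⟩) nofun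
    | ret p => exact iff_of_false (fun ⟨_, hi, _⟩ => nw.nesting.not_rel_of_rel hi l hl) nofun
  by_cases hj' : nw.IsReturn j
  · obtain ⟨i, hi⟩ := hj'
    rw [nw.nesting.move_of_return hi]
    cases μ with
    | call => exact iff_of_false hj nofun
    | int => exact iff_of_false (fun h => h.2 ⟨i, hi⟩) nofun
    | ret p =>
      rw [Move.ret.injEq, ← hret hi]
      exact ⟨fun ⟨i', hi', hp⟩ => nw.nesting.left_unique hi' hi ▸ hp, fun hp => ⟨i, hi, hp⟩⟩
  · rw [nw.nesting.move_of_internal hj hj']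
    cases μ with
    | call => exact iff_of_false hj nofun
    | int => exact iff_of_true ⟨hj, hj'⟩ rfl
    | ret p => exact iff_of_false (fun ⟨i, hi, _⟩ => hj' ⟨i, hi⟩) nofun

open Classical in
/-- The sets that encode the run `r`, except for its last state. -/
noncomputable def runSets {n : ℕ} (e : Fin m ≃ Q) (r : Fin (n + 1) → Q) (i : Fin m) :
    (Finset.Icc 1 n).powerset :=
  ⟨{j ∈ Finset.Icc 1 n | e i = clampFun r (j - 1)},
    Finset.mem_powerset.2 (Finset.filter_subset _ _)⟩

theorem mem_runSets {n : ℕ} {r : Fin (n + 1) → Q} {i : Fin m} :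
    j ∈ (runSets e r i : Finset ℕ) ↔ j ∈ Finset.Icc 1 n ∧ e i = clampFun r (j - 1) := by
  simp only [runSets, Finset.mem_filter]

theorem encodesRun_runSets (e : Fin m ≃ Q) (r : Fin (nw.len + 1) → Q) :
    EncodesRun e (fun i => runSets e r i) nw (clampFun r) := fun _ hj _ =>
  mem_runSets.trans (and_iff_right hj)

theorem EncodesRun.eq_runSets {T : Fin m → (Finset.Icc 1 nw.len).powerset}
    {r : Fin (nw.len + 1) → Q} (h : EncodesRun e (fun i => T i) nw (clampFun r)) :
    runSets e r = T := by
  refine funext fun i => Subtype.ext (Finset.ext fun j => mem_runSets.trans ?_)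
  have hT : j ∈ (T i : Finset ℕ) → j ∈ Finset.Icc 1 nw.len :=
    fun hj => Finset.mem_powerset.1 (T i).2 hj
  exact ⟨fun hj => (h j hj.1 i).2 hj.2, fun hj => ⟨hT hj, (h j (hT hj) i).1 hj⟩⟩

theorem runSets_injective (e : Fin m ≃ Q) (n : ℕ) : Function.Injective
    fun r : Fin (n + 1) → Q => (r (Fin.last n), runSets e r) := by
  intro r r' h
  obtain ⟨hlast, hsets⟩ := Prod.mk.inj h
  refine funext fun k => ?_
  cases k using Fin.lastCases with
  | last => exact hlast
  | cast k =>
    have hk : (k : ℕ) + 1 ∈ Finset.Icc 1 n := Finset.mem_Icc.2 ⟨by omega, k.2⟩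
    have hmem (r : Fin (n + 1) → Q) (i : Fin m) :
        (k : ℕ) + 1 ∈ (runSets e r i : Finset ℕ) ↔ e i = r k.castSucc := by
      refine (mem_runSets.trans (and_iff_right hk)).trans ?_
      rw [Nat.add_sub_cancel, clampFun_of_le r k.2.le]
      rfl
    rw [← e.apply_symm_apply (r k.castSucc), ← hmem r', ← hsets, hmem, e.apply_symm_apply]

theorem exists_eq_runSets {T : Fin m → (Finset.Icc 1 nw.len).powerset}
    (h : ∀ j ∈ Finset.Icc 1 nw.len, ∃ q, StateAt e (fun i => T i) q j) (q' : Q) :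
    ∃ r : Fin (nw.len + 1) → Q, (r (Fin.last _), runSets e r) = (q', T) := by
  have : Nonempty Q := ⟨q'⟩
  choose! ρ hρ using h
  refine ⟨fun k => if (k : ℕ) < nw.len then ρ (k + 1) else q',
    Prod.ext (if_neg (lt_irrefl _)) (EncodesRun.eq_runSets fun j hj => ?_)⟩
  have := Finset.mem_Icc.1 hj
  rw [clampFun_of_le _ (by omega), if_pos (by grind), Nat.sub_add_cancel this.1]
  exact hρ j hj

end Encodes

section Definability

theorem NestedWord.mem_Icc_of_rel {i j : ℕ} (h : nw.rel i j) :
    i ∈ Finset.Icc 1 nw.len ∧ j ∈ Finset.Icc 1 nw.len := by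
  have := nw.isNest.1 i j h
  simp only [Finset.mem_Icc, NestedWord.len]
  omega

theorem FODefinable.congr {P P' : NestedWord Δ → (ℕ → ℕ) → (ℕ → Finset ℕ) → Prop}
    (hP : FODefinable m P) (h : ∀ nw g G, P nw g G ↔ P' nw g G) : FODefinable m P' :=
  let ⟨ψ, hψ, hψP⟩ := hP
  ⟨ψ, hψ, fun nw g G => (hψP nw g G).trans (h nw g G)⟩

theorem FODefinable.le_one (x : ℕ) : FODefinable (Δ := Δ) m fun _ g _ => g x ≤ 1 :=
  ((le x (x + 1)).forall_position (x + 1)).congr fun nw g _ => by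
    simp only [Function.update_self, Function.update_of_ne (Nat.succ_ne_self x).symm]
    exact ⟨fun h => h 1 nw.one_mem_Icc,
      fun h i hi => h.trans (Finset.mem_Icc.1 hi).1⟩

theorem FODefinable.len_le (x : ℕ) : FODefinable (Δ := Δ) m fun nw g _ => nw.len ≤ g x :=
  ((le (x + 1) x).forall_position (x + 1)).congr fun nw g _ => by
    simp only [Function.update_self, Function.update_of_ne (Nat.succ_ne_self x).symm]
    exact ⟨fun h => h _ (Finset.mem_Icc.2 ⟨nw.one_le_len, le_rfl⟩),
      fun h i hi => (Finset.mem_Icc.1 hi).2.trans h⟩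

theorem FODefinable.isCall (x : ℕ) : FODefinable (Δ := Δ) m fun nw g _ => nw.IsCall (g x) :=
  ((rel x (x + 1)).exists_position (x + 1)).congr fun nw g _ => by
    simp only [Function.update_self, Function.update_of_ne (Nat.succ_ne_self x).symm]
    exact exists_congr fun i => and_iff_right_of_imp fun h => (nw.mem_Icc_of_rel h).2

theorem FODefinable.isReturn (x : ℕ) : FODefinable (Δ := Δ) m fun nw g _ => nw.IsReturn (g x) :=
  ((rel (x + 1) x).exists_position (x + 1)).congr fun nw g _ => by
    simp only [Function.update_self, Function.update_of_ne (Nat.succ_ne_self x).symm]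
    exact exists_congr fun i => and_iff_right_of_imp fun h => (nw.mem_Icc_of_rel h).1

variable (e : Fin m ≃ Q)

theorem FODefinable.stateAt (q : Q) (x : ℕ) :
    FODefinable (Δ := Δ) m fun _ g G => StateAt e (fun i => G i) q (g x) := by
  refine forall_finite fun i => ?_
  by_cases hi : e i = q
  · simpa only [hi, iff_true] using mem x i.2
  · simpa only [hi, iff_false] using (mem x i.2).not

theorem FODefinable.moveAt (μ : Move Q) (x : ℕ) :
    FODefinable (Δ := Δ) m fun nw g G => MoveAt e (fun i => G i) nw (g x) μ := by
  cases μ with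
  | call => exact isCall x
  | int => exact (isCall x).not.and (isReturn x).not
  | ret p =>
    refine (((rel (x + 1) x).and (stateAt e p (x + 1))).exists_position (x + 1)).congr
      fun nw g G => ?_
    simp only [Function.update_self, Function.update_of_ne (Nat.succ_ne_self x).symm]
    exact exists_congr fun i => and_iff_right_of_imp fun h => (nw.mem_Icc_of_rel h.1).1

theorem FODefinable.stateAfter (q' q : Q) (x : ℕ) :
    FODefinable (Δ := Δ) m fun nw g G => StateAfter e (fun i => G i) q' nw (g x) q := by
  have hsucc := ((le (x + 1) x).not (Δ := Δ) (m := m)).and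
    (((le (x + 2) x).or (le (x + 1) (x + 2))).forall_position (x + 2))
  refine (((len_le x).and (const (q = q'))).or
    ((hsucc.and (stateAt e q (x + 1))).exists_position (x + 1))).congr
    fun nw g G => or_congr_right ?_
  have hx : x ≠ x + 1 ∧ x ≠ x + 2 ∧ x + 1 ≠ x + 2 := by omega
  simp only [Function.update_self, Function.update_of_ne hx.1, Function.update_of_ne hx.2.1,
    Function.update_of_ne hx.2.2, not_le, Finset.mem_Icc]
  constructor
  · rintro ⟨i, hi, ⟨hlt, hmin⟩, hq⟩
    obtain rfl : i = g x + 1 := by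
      by_contra hne
      have := hmin (g x + 1) ⟨by omega, by omega⟩
      omega
    exact ⟨hi.2, hq⟩
  · exact fun ⟨hle, hq⟩ => ⟨g x + 1, ⟨by omega, hle⟩, ⟨by omega, fun l _ => by omega⟩, hq⟩

theorem FODefinable.stateAt_one (q : Q) :
    FODefinable (Δ := Δ) m fun _ _ G => StateAt e (fun i => G i) q 1 := by
  refine (((le_one 0).and (stateAt e q 0)).exists_position 0).congr fun nw g G => ?_
  simp only [Function.update_self]
  constructor
  · rintro ⟨i, hi, hi', hq⟩
    rwa [le_antisymm hi' (Finset.mem_Icc.1 hi).1] at hq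
  · exact fun hq => ⟨1, nw.one_mem_Icc, le_rfl, hq⟩

end Definability

namespace WNWA

variable [CommSemiring K] [Fintype Δ] (A : WNWA K Δ) (e : Fin m ≃ A.Q) {X : Fin m → Finset ℕ}

/-- The weight of the transition made at position `j` in the run that is encoded by the sets `X`
and ends in `q'`. It is `0` if `X` does not encode a state before `j`. -/
noncomputable def transitionWeight (X : Fin m → Finset ℕ) (q' : A.Q) (nw : NestedWord Δ) (j : ℕ) :
    K :=
  ∑ t : A.Q × Move A.Q × Δ × A.Q,
    iverson K (StateAt e X t.1 j ∧ MoveAt e X nw j t.2.1 ∧ nw.letter j = t.2.2.1 ∧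
      StateAfter e X q' nw j t.2.2.2) * A.trans t.1 t.2.1 t.2.2.1 t.2.2.2

/-- The sum of the weights of the runs that the sets `X` encode, over all last states. -/
noncomputable def codeWeight (X : Fin m → Finset ℕ) (nw : NestedWord Δ) : K :=
  ∑ q', (∑ q, iverson K (StateAt e X q 1) * A.ι q) *
    (∏ j ∈ Finset.Icc 1 nw.len, A.transitionWeight e X q' nw j) * A.κ q'

variable {A e}

theorem transitionWeight_of_encodesRun {ρ : ℕ → A.Q} (h : EncodesRun e X nw ρ) {j : ℕ}
    (hj : j ∈ Finset.Icc 1 nw.len) :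
    A.transitionWeight e X (ρ nw.len) nw j = A.posWeight nw ρ j := by
  rw [A.posWeight_eq_trans]
  refine sum_iverson_of_unique
    (i₀ := (ρ (j - 1), nw.nesting.move ρ j, nw.letter j, ρ j)) (Finset.mem_univ _) ?_
    fun t => A.trans t.1 t.2.1 t.2.2.1 t.2.2.2
  rintro ⟨q, μ, a, q'⟩ -
  rw [h.stateAt_iff hj, h.moveAt_iff, h.stateAfter_iff hj, eq_comm (b := a)]
  simp only [Prod.mk.injEq]

theorem transitionWeight_eq_zero {j : ℕ} (h : ∀ q, ¬StateAt e X q j) (q' : A.Q) :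
    A.transitionWeight e X q' nw j = 0 :=
  Finset.sum_eq_zero fun t _ => by rw [iverson_of_false fun ht => h _ ht.1, zero_mul]

theorem behavior_eq_sum_codeWeight (nw : NestedWord Δ) :
    A.behavior nw = ∑ T : Fin m → (Finset.Icc 1 nw.len).powerset,
      A.codeWeight e (fun i => T i) nw := by
  simp only [codeWeight]
  rw [Finset.sum_comm, ← Fintype.sum_prod_type']
  refine Fintype.sum_of_injective _ (runSets_injective e nw.len) _ _ ?_ fun r => ?_
  · rintro ⟨q', T⟩ hT
    obtain ⟨j, hj, hq⟩ : ∃ j ∈ Finset.Icc 1 nw.len, ∀ q, ¬StateAt e (fun i => T i) q j := by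
      by_contra! h
      exact hT (exists_eq_runSets h q')
    rw [Finset.prod_eq_zero hj (transitionWeight_eq_zero hq q'), mul_zero, zero_mul]
  · have hr := encodesRun_runSets e r
    have hstart : ∑ q, iverson K (StateAt e (fun i => runSets e r i) q 1) * A.ι q = A.ι (r 0) :=
      sum_iverson_of_unique (Finset.mem_univ _) (fun _ _ => hr.stateAt_iff nw.one_mem_Icc) A.ι
    have hlast : clampFun r nw.len = r (Fin.last _) := clampFun_of_le r le_rfl
    simp only [hstart, ← hlast, runWeight]
    exact congrArg (_ * · * _) (Finset.prod_congr rfl fun j hj =>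
      (transitionWeight_of_encodesRun hr hj).symm)

variable (A e)

theorem definableBy_transitionWeight (q' : A.Q) (x : ℕ) :
    DefinableBy (WMSO.IsStep m) fun nw g G =>
      A.transitionWeight e (fun i => G i) q' nw (g x) :=
  .sum _ fun t => .mul (FODefinable.iverson <| (FODefinable.stateAt e t.1 x).and <|
    (FODefinable.moveAt e t.2.1 x).and <| (FODefinable.lab t.2.2.1 x).and <|
      FODefinable.stateAfter e q' t.2.2.2 x) (.const _ _)

theorem definableBy_codeWeight :
    DefinableBy (WMSO.IsFirstOrder m) fun nw _ G => A.codeWeight e (fun i => G i) nw := by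
  refine .sum _ fun q' => .mul (.mul (.sum _ fun q => .mul ?_ (.const _ _)) ?_) (.const _ _)
  · exact (FODefinable.stateAt_one e q).iverson.mono fun _ h => h.isFirstOrder
  · simpa only [Function.update_self] using
      (A.definableBy_transitionWeight e q' 0).prod_positions 0

end WNWA

theorem NWRegular.definable_sREMSO [CommSemiring K] [Finite Δ] {S : NestedWord Δ → K}
    (hS : NWRegular S) : NWDefinable SREMSO S := by
  have := Fintype.ofFinite Δ
  obtain ⟨A, hA⟩ := hS
  let e := (Fintype.equivFin A.Q).symm
  obtain ⟨φ, hφ, hsem⟩ := A.definableBy_codeWeight e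
  obtain ⟨φ₁, hφ₁, hfree, hsem₁⟩ := hφ.exists_freeF_eq_empty fun nw g g' G => by rw [hsem, hsem]
  obtain ⟨φ₂, hφ₂, hsent, hsem₂⟩ := (SREMSO.base hφ₁.srfo).exists_sentence hfree hφ₁.freeS_subset
  refine ⟨φ₂, hφ₂, hsent, fun nw g G => ?_⟩
  rw [hsem₂, ← hA, A.behavior_eq_sum_codeWeight (e := e)]
  refine Finset.sum_congr rfl fun T _ => ?_
  rw [hsem₁, hsem]
  simp only [assignSets, Fin.is_lt, dif_pos, Fin.eta]

theorem SREMSO.srmso {φ : WMSO K Δ} (hφ : SREMSO φ) : SRMSO φ := by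
  induction hφ with
  | base h => exact h.1
  | exS _ ih => exact ih

theorem NWDefinable.sRMSO_of_sREMSO [CommSemiring K] {S : NestedWord Δ → K}
    (hS : NWDefinable SREMSO S) : NWDefinable SRMSO S :=
  let ⟨φ, hφ, h⟩ := hS
  ⟨φ, hφ.srmso, h⟩

end Runs

/-- **Theorem (Mathissen).** A nested word series is regular iff it is
`sRMSO(K)`-definable iff it is `sREMSO(K)`-definable. -/
theorem regular_iff_sRMSO_definable_iff_sREMSO_definable
    (K Δ : Type) [CommSemiring K] [Fintype Δ] (h01 : (0 : K) ≠ 1)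
    (S : NestedWord Δ → K) :
    (NWRegular S ↔ NWDefinable SRMSO S) ∧ (NWRegular S ↔ NWDefinable SREMSO S) :=
  ⟨⟨fun h => h.definable_sREMSO.sRMSO_of_sREMSO, NWRegular.of_definable_sRMSO⟩,
    ⟨NWRegular.definable_sREMSO, fun h => NWRegular.of_definable_sRMSO h.sRMSO_of_sREMSO⟩⟩
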